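/- arXiv:math/9901146 — 3 statements merged into one kernel-verified Lean document; each statement's English description precedes it below -/
import Mathlib

section
/- There is exactly one C² function G : ℝ × ℝ × [0, 1/m) → ℝ solving ∂_τ G = (1/2)(∂_σ G)² with G(σ,α,0) = R(σ,α); this G is C^∞ and 2π-periodic in α. Moreover, for every τ ∈ [0, 1/m) and every α, the map σ ↦ σ − τ·∂_σR(σ,α) is a C^∞ diffeomorphism of ℝ, and ∂_σG(σ − τ·∂_σR(σ,α), α, τ) = ∂_σR(σ,α) for all (σ,α) ∈ ℝ² and τ ∈ [0, 1/m). -/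
noncomputable section

/-- Partial derivative in coordinate `i` (0 = σ, 1 = α, 2 = τ) of a function on `ℝ × ℝ × ℝ`. -/
def pd (i : Fin 3) (f : ℝ × ℝ × ℝ → ℝ) (p : ℝ × ℝ × ℝ) : ℝ :=
  if i = 0 then deriv (fun s => f (s, p.2.1, p.2.2)) p.1
  else if i = 1 then deriv (fun s => f (p.1, s, p.2.2)) p.2.1
  else deriv (fun s => f (p.1, p.2.1, s)) p.2.2

/-- `∂_σ² R (σ, α)`. -/
def d2R (R : ℝ → ℝ → ℝ) (σ α : ℝ) : ℝ := iteratedDeriv 2 (fun σ' => R σ' α) σ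

/-- `m = sup ∂_σ² R`. -/
def mOf (R : ℝ → ℝ → ℝ) : ℝ := sSup (Set.range fun p : ℝ × ℝ => d2R R p.1 p.2)

/-- The domain `ℝ × ℝ × [0, 1/m)`. -/
def burgersDom (R : ℝ → ℝ → ℝ) : Set (ℝ × ℝ × ℝ) :=
  {p | 0 ≤ p.2.2 ∧ p.2.2 < (mOf R)⁻¹}

/-- `G` is a `C²` solution of `∂_τ G = ½ (∂_σ G)²` on `ℝ × ℝ × [0, 1/m)` with `G(·,·,0) = R`.
(Smoothness is required on `{τ < 1/m}` so that the displayed derivatives are honest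
one-sided derivatives on the closed side `τ = 0`; by Seeley extension this is
equivalent to being `C²` on `ℝ × ℝ × [0, 1/m)`.) -/
structure IsBurgersSol (R : ℝ → ℝ → ℝ) (G : ℝ × ℝ × ℝ → ℝ) : Prop where
  smooth : ContDiffOn ℝ 2 G {p : ℝ × ℝ × ℝ | p.2.2 < (mOf R)⁻¹}
  eqn : ∀ p ∈ burgersDom R, pd 2 G p = (1 / 2) * (pd 0 G p) ^ 2
  init : ∀ σ α : ℝ, G (σ, α, 0) = R σ α

/-- All derivatives of (the uncurried) `R` are bounded. -/
def AllDerivBounded (R : ℝ → ℝ → ℝ) : Prop :=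
  ∀ n : ℕ, ∃ C : ℝ, ∀ p : ℝ × ℝ, ‖iteratedFDeriv ℝ n (fun q : ℝ × ℝ => R q.1 q.2) p‖ ≤ C

open Set Filter Topology

lemma char_strictMono (r : ℝ × ℝ → ℝ) (rs : ℝ → ℝ → ℝ)
    (hrs : ∀ s α, HasDerivAt (fun s => r (s, α)) (rs s α) s) (k α : ℝ)
    (hpos : ∀ s, 0 < 1 - k * rs s α) :
    StrictMono (fun s => s - k * r (s, α)) := by
  have h : ∀ s, HasDerivAt (fun s => s - k * r (s, α)) (1 - k * rs s α) s := fun s =>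
    (hasDerivAt_id s).sub ((hrs s α).const_mul k)
  apply strictMono_of_deriv_pos
  intro s
  rw [(h s).deriv]
  exact hpos s

lemma char_surj (r : ℝ × ℝ → ℝ) (hr : Continuous r) (C : ℝ) (hC : ∀ q, |r q| ≤ C) (k α : ℝ) :
    Function.Surjective (fun s => s - k * r (s, α)) := by
  have hb : ∀ s, |k * r (s, α)| ≤ |k| * C := fun s => by
    rw [abs_mul]; exact mul_le_mul_of_nonneg_left (hC _) (abs_nonneg _)
  apply Continuous.surjective
  · fun_prop
  · apply tendsto_atTop_mono (f := fun s => s + (-(|k| * C)))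
    · intro s
      have := (abs_le.1 (hb s)).2
      linarith
    · exact tendsto_atTop_add_const_right _ _ tendsto_id
  · refine tendsto_atBot_mono (g := fun s => s - k * r (s, α)) (f := fun s => s + (|k| * C)) ?_ ?_
    · intro s
      have := (abs_le.1 (hb s)).1
      linarith
    · exact tendsto_atBot_add_const_right _ _ tendsto_id

lemma S_smooth (r : ℝ × ℝ → ℝ) (hr : ContDiff ℝ (⊤ : ℕ∞) r) (rs : ℝ → ℝ → ℝ)
    (hrs : ∀ s α, HasDerivAt (fun s => r (s, α)) (rs s α) s) (c : ℝ → ℝ)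
    (hc : ContDiff ℝ (⊤ : ℕ∞) c) (T : ℝ)
    (hpos : ∀ t < T, ∀ s α, 0 < 1 - c t * rs s α)
    (S : ℝ × ℝ × ℝ → ℝ)
    (hS : ∀ p : ℝ × ℝ × ℝ, p.2.2 < T → S p - c p.2.2 * r (S p, p.2.1) = p.1) :
    ContDiffOn ℝ (⊤ : ℕ∞) S {p | p.2.2 < T} := by
  intro q hq
  apply ContDiffAt.contDiffWithinAt
  have hq' : q.2.2 < T := hq
  set a : ℝ × ℝ × ℝ := (S q, q.2) with ha
  let Φ : ℝ × ℝ × ℝ → ℝ × ℝ × ℝ := fun x => (x.1 - c x.2.2 * r (x.1, x.2.1), x.2)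
  have hΦ : ContDiff ℝ (⊤ : ℕ∞) Φ := by
    dsimp only [Φ]; fun_prop
  have hΦa : Φ a = q := by
    simp only [Φ, ha, hS q hq']
  have hn : ((⊤ : ℕ∞) : WithTop ℕ∞) ≠ 0 := by simp
  have hd : HasFDerivAt Φ (fderiv ℝ Φ a) a :=
    (hΦ.differentiable hn a).hasFDerivAt
  have hFd : DifferentiableAt ℝ (fun x : ℝ × ℝ × ℝ => x.1 - c x.2.2 * r (x.1, x.2.1)) a := by
    have : ContDiff ℝ (⊤ : ℕ∞) (fun x : ℝ × ℝ × ℝ => x.1 - c x.2.2 * r (x.1, x.2.1)) := by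
      fun_prop
    exact this.differentiable hn a
  have hfd : HasFDerivAt Φ ((fderiv ℝ (fun x : ℝ × ℝ × ℝ => x.1 - c x.2.2 * r (x.1, x.2.1)) a).prod
      (ContinuousLinearMap.snd ℝ ℝ (ℝ × ℝ))) a :=
    hFd.hasFDerivAt.prodMk hasFDerivAt_snd
  have he0 : ∀ v : ℝ, fderiv ℝ (fun x : ℝ × ℝ × ℝ => x.1 - c x.2.2 * r (x.1, x.2.1)) a (v, 0)
      = v * (1 - c q.2.2 * rs (S q) q.2.1) := by
    intro v
    have h1 : HasDerivAt (fun s : ℝ => ((s, q.2) : ℝ × ℝ × ℝ)) ((1 : ℝ), (0 : ℝ × ℝ)) (S q) :=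
      (hasDerivAt_id _).prodMk (hasDerivAt_const _ _)
    have h2 := HasFDerivAt.comp_hasDerivAt (S q) (hFd.hasFDerivAt : HasFDerivAt _ _ (S q, q.2)) h1
    have h3 : HasDerivAt (fun s => s - c q.2.2 * r (s, q.2.1)) (1 - c q.2.2 * rs (S q) q.2.1)
        (S q) := (hasDerivAt_id _).sub ((hrs _ _).const_mul _)
    have h4 := h2.unique h3
    have : ((v, 0) : ℝ × ℝ × ℝ) = v • ((1 : ℝ), (0 : ℝ × ℝ)) := by simp
    rw [this, map_smul, ha, h4, smul_eq_mul]
  have hinj : Function.Injective (fderiv ℝ Φ a) := by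
    rw [injective_iff_map_eq_zero]
    rintro ⟨v, w⟩ hv
    rw [hfd.fderiv] at hv
    simp only [ContinuousLinearMap.prod_apply, ContinuousLinearMap.coe_snd', Prod.mk_eq_zero] at hv
    obtain ⟨hv1, rfl⟩ := hv
    rw [he0] at hv1
    have := (hpos _ hq' (S q) q.2.1).ne'
    have : v = 0 := by simpa [this] using hv1
    simp [this]
  let L : (ℝ × ℝ × ℝ) ≃L[ℝ] (ℝ × ℝ × ℝ) :=
    (LinearEquiv.ofInjectiveEndo (fderiv ℝ Φ a : (ℝ × ℝ × ℝ) →ₗ[ℝ] (ℝ × ℝ × ℝ)) hinj).toContinuousLinearEquiv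
  have hL : HasFDerivAt Φ (L : (ℝ × ℝ × ℝ) →L[ℝ] (ℝ × ℝ × ℝ)) a := by
    convert hd using 1
    all_goals rfl
  have hca : ContDiffAt ℝ (⊤ : ℕ∞) Φ a := hΦ.contDiffAt
  have hopen : IsOpen {p : ℝ × ℝ × ℝ | p.2.2 < T} := isOpen_lt (by fun_prop) (by fun_prop)
  have hg : ∀ᶠ x in 𝓝 a, (fun p : ℝ × ℝ × ℝ => (S p, p.2)) (Φ x) = x := by
    filter_upwards [hopen.mem_nhds (show a ∈ {p : ℝ × ℝ × ℝ | p.2.2 < T} from hq')] with x hx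
    have hx' : x.2.2 < T := hx
    have h1 := hS (Φ x) hx'
    have h2 := (char_strictMono r rs hrs (c x.2.2) x.2.1 (fun s => hpos _ hx' s _)).injective
      (show S (Φ x) - c x.2.2 * r (S (Φ x), x.2.1) = x.1 - c x.2.2 * r (x.1, x.2.1) from h1)
    exact Prod.ext h2 rfl
  have hu := (hca.hasStrictFDerivAt' hL hn).localInverse_unique
    (g := fun p : ℝ × ℝ × ℝ => (S p, p.2)) hg
  have hl := hca.to_localInverse hL hn
  rw [hΦa] at hu hl
  have : ContDiffAt ℝ (⊤ : ℕ∞) (fun p : ℝ × ℝ × ℝ => (S p, p.2)) q := hl.congr_of_eventuallyEq hu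
  exact this.fst

lemma exists_cutoff (B T : ℝ) (hB : 0 ≤ B) (d : ℝ → ℝ → ℝ) (hd : ∀ s α, -B ≤ d s α)
    (hd' : ∀ t, 0 ≤ t → t < T → ∀ s α, 0 < 1 - t * d s α) :
    ∃ c : ℝ → ℝ, ContDiff ℝ (⊤ : ℕ∞) c ∧ (∀ t, 0 ≤ t → c =ᶠ[𝓝 t] id) ∧
      ∀ t < T, ∀ s α, 0 < 1 - c t * d s α := by
  set δ : ℝ := 1 / (2 * (B + 1)) with hδ
  have hδ0 : 0 < δ := by positivity
  have h1 : ∀ t, -δ ≤ t → t * Real.smoothTransition (2 + t / δ) = t := by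
    intro t ht
    rw [Real.smoothTransition.one_of_one_le, mul_one]
    have : -1 ≤ t / δ := by rw [le_div_iff₀ hδ0]; linarith
    linarith
  refine ⟨fun t => t * Real.smoothTransition (2 + t / δ), ?_, ?_, ?_⟩
  · exact contDiff_id.mul (Real.smoothTransition.contDiff.comp (by fun_prop))
  · intro t ht
    filter_upwards [lt_mem_nhds (show -δ < t by linarith)] with x hx
    exact h1 x hx.le
  · intro t ht s α
    rcases le_or_gt 0 t with h0 | h0
    · simp only [h1 t (by linarith)]
      exact hd' t h0 ht s α
    · have hz := Real.smoothTransition.nonneg (2 + t / δ)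
      have ho := Real.smoothTransition.le_one (2 + t / δ)
      set z := Real.smoothTransition (2 + t / δ) with hzz
      have hlow : -(2 * δ) ≤ t * z := by
        rcases le_or_gt t (-(2 * δ)) with h2 | h2
        · have : z = 0 := by
            rw [hzz]; apply Real.smoothTransition.zero_of_nonpos
            have : t / δ ≤ -2 := by rw [div_le_iff₀ hδ0]; linarith
            linarith
          rw [this]; simp; positivity
        · nlinarith
      have hneg : t * z ≤ 0 := by nlinarith
      have h3 : 2 * δ * (B + 1) = 1 := by rw [hδ]; field_simp
      have := hd s α
      show 0 < 1 - t * z * d s α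
      nlinarith

def rOf (R : ℝ → ℝ → ℝ) (q : ℝ × ℝ) : ℝ := deriv (fun s => R s q.2) q.1

lemma hasDerivAt_slice (f : ℝ × ℝ → ℝ) (hf : Differentiable ℝ f) (s α : ℝ) :
    HasDerivAt (fun s => f (s, α)) (fderiv ℝ f (s, α) (1, 0)) s := by
  have h1 : HasDerivAt (fun s : ℝ => ((s, α) : ℝ × ℝ)) ((1 : ℝ), (0 : ℝ)) s :=
    (hasDerivAt_id _).prodMk (hasDerivAt_const _ _)
  exact HasFDerivAt.comp_hasDerivAt s (hf (s, α)).hasFDerivAt h1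

lemma rOf_eq (R : ℝ → ℝ → ℝ) (hsm : ContDiff ℝ (⊤ : ℕ∞) (fun q : ℝ × ℝ => R q.1 q.2)) :
    rOf R = fun q => fderiv ℝ (fun q : ℝ × ℝ => R q.1 q.2) q (1, 0) := by
  funext q
  exact (hasDerivAt_slice _ (hsm.differentiable (by simp)) q.1 q.2).deriv

lemma rOf_smooth (R : ℝ → ℝ → ℝ) (hsm : ContDiff ℝ (⊤ : ℕ∞) (fun q : ℝ × ℝ => R q.1 q.2)) :
    ContDiff ℝ (⊤ : ℕ∞) (rOf R) := by
  rw [rOf_eq R hsm]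
  exact (hsm.fderiv_right (m := (⊤ : ℕ∞)) (by simp)).clm_apply contDiff_const

lemma rOf_hasDerivAt (R : ℝ → ℝ → ℝ) (hsm : ContDiff ℝ (⊤ : ℕ∞) (fun q : ℝ × ℝ => R q.1 q.2))
    (s α : ℝ) : HasDerivAt (fun s => R s α) (rOf R (s, α)) s :=
  (hasDerivAt_slice _ (hsm.differentiable (by simp)) s α).differentiableAt.hasDerivAt

lemma d2R_hasDerivAt (R : ℝ → ℝ → ℝ) (hsm : ContDiff ℝ (⊤ : ℕ∞) (fun q : ℝ × ℝ => R q.1 q.2))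
    (s α : ℝ) : HasDerivAt (fun s => rOf R (s, α)) (d2R R s α) s := by
  have h := (hasDerivAt_slice _ ((rOf_smooth R hsm).differentiable (by simp)) s
    α).differentiableAt.hasDerivAt
  refine h.congr_deriv ?_
  unfold d2R
  rw [iteratedDeriv_succ, iteratedDeriv_one]
  rfl

lemma rOf_bdd (R : ℝ → ℝ → ℝ) (hsm : ContDiff ℝ (⊤ : ℕ∞) (fun q : ℝ × ℝ => R q.1 q.2))
    (hbd : AllDerivBounded R) : ∃ C, ∀ q, |rOf R q| ≤ C := by
  obtain ⟨C, hC⟩ := hbd 1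
  refine ⟨C, fun q => ?_⟩
  rw [rOf_eq R hsm]
  have h := (iteratedFDeriv ℝ 1 (fun q : ℝ × ℝ => R q.1 q.2) q).le_opNorm (fun _ => ((1 : ℝ), (0 : ℝ)))
  rw [iteratedFDeriv_one_apply] at h
  simp [Prod.norm_def] at h
  exact h.trans (by simpa using hC q)

lemma d2R_bdd (R : ℝ → ℝ → ℝ) (hsm : ContDiff ℝ (⊤ : ℕ∞) (fun q : ℝ × ℝ => R q.1 q.2))
    (hbd : AllDerivBounded R) : ∃ C, 0 ≤ C ∧ ∀ s α, |d2R R s α| ≤ C := by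
  obtain ⟨C, hC⟩ := hbd 2
  refine ⟨C, (norm_nonneg _).trans (hC (0, 0)), fun s α => ?_⟩
  have h1 := (hasDerivAt_slice _ ((rOf_smooth R hsm).differentiable (by simp)) s α)
  rw [(d2R_hasDerivAt R hsm s α).unique h1, rOf_eq R hsm]
  have hdd : DifferentiableAt ℝ (fderiv ℝ (fun q : ℝ × ℝ => R q.1 q.2)) (s, α) :=
    (hsm.fderiv_right (m := (⊤ : ℕ∞)) (by simp)).differentiable (by simp) _
  have h2 : fderiv ℝ (fun q => fderiv ℝ (fun q : ℝ × ℝ => R q.1 q.2) q (1, 0)) (s, α) (1, 0)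
      = fderiv ℝ (fderiv ℝ (fun q : ℝ × ℝ => R q.1 q.2)) (s, α) (1, 0) (1, 0) := by
    rw [fderiv_clm_apply hdd (by fun_prop)]
    simp
  rw [h2]
  have h := (iteratedFDeriv ℝ 2 (fun q : ℝ × ℝ => R q.1 q.2) (s, α)).le_opNorm
    (fun _ => ((1 : ℝ), (0 : ℝ)))
  rw [iteratedFDeriv_two_apply] at h
  simp [Prod.norm_def] at h
  exact h.trans (hC _)

/-- Behaviour of any `C²` solution along characteristics. -/
lemma along_char (R : ℝ → ℝ → ℝ) (hsm : ContDiff ℝ (⊤ : ℕ∞) (fun q : ℝ × ℝ => R q.1 q.2))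
    (G : ℝ × ℝ × ℝ → ℝ) (hG : IsBurgersSol R G)
    (σ α τ : ℝ) (h0 : 0 ≤ τ) (hτ : τ < (mOf R)⁻¹) :
    pd 0 G (σ - τ * rOf R (σ, α), α, τ) = rOf R (σ, α) ∧
    G (σ - τ * rOf R (σ, α), α, τ) = R σ α - τ * (rOf R (σ, α)) ^ 2 / 2 := by
  set T := (mOf R)⁻¹ with hT
  set Ω : Set (ℝ × ℝ × ℝ) := {p | p.2.2 < T} with hΩ
  have hopen : IsOpen Ω := isOpen_lt (by fun_prop) (by fun_prop)
  have hGat : ∀ p ∈ Ω, ContDiffAt ℝ 2 G p := fun p hp => hG.smooth.contDiffAt (hopen.mem_nhds hp)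
  have hGd : ∀ p ∈ Ω, HasFDerivAt G (fderiv ℝ G p) p := fun p hp =>
    ((hGat p hp).differentiableAt (by simp)).hasFDerivAt
  have hDat : ∀ p ∈ Ω, ContDiffAt ℝ 1 (fderiv ℝ G) p := fun p hp =>
    (hGat p hp).fderiv_right (by norm_num)
  have hDd : ∀ p ∈ Ω, HasFDerivAt (fderiv ℝ G) (fderiv ℝ (fderiv ℝ G) p) p := fun p hp =>
    ((hDat p hp).differentiableAt (by simp)).hasFDerivAt
  have hDc : ∀ p ∈ Ω, ContinuousAt (fderiv ℝ (fderiv ℝ G)) p := fun p hp =>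
    ((hDat p hp).fderiv_right (m := 0) (by norm_num)).continuousAt
  let e0 : ℝ × ℝ × ℝ := (1, 0, 0)
  let e2 : ℝ × ℝ × ℝ := (0, 0, 1)
  have hl0 : ∀ p : ℝ × ℝ × ℝ, HasDerivAt (fun s : ℝ => ((s, p.2.1, p.2.2) : ℝ × ℝ × ℝ)) e0 p.1 :=
    fun p => (hasDerivAt_id _).prodMk ((hasDerivAt_const _ _).prodMk (hasDerivAt_const _ _))
  have hl2 : ∀ p : ℝ × ℝ × ℝ, HasDerivAt (fun s : ℝ => ((p.1, p.2.1, s) : ℝ × ℝ × ℝ)) e2 p.2.2 :=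
    fun p => (hasDerivAt_const _ _).prodMk ((hasDerivAt_const _ _).prodMk (hasDerivAt_id _))
  have hpd0 : ∀ p ∈ Ω, pd 0 G p = fderiv ℝ G p e0 := fun p hp => by
    simp only [pd, if_true]
    exact (HasFDerivAt.comp_hasDerivAt p.1 (hGd p hp) (hl0 p)).deriv
  have hpd2 : ∀ p ∈ Ω, pd 2 G p = fderiv ℝ G p e2 := fun p hp => by
    have : pd 2 G p = deriv (fun s => G (p.1, p.2.1, s)) p.2.2 := by
      simp [pd]
    rw [this]
    exact (HasFDerivAt.comp_hasDerivAt p.2.2 (hGd p hp) (hl2 p)).deriv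
  have heq : ∀ p ∈ burgersDom R, fderiv ℝ G p e2 = 1 / 2 * (fderiv ℝ G p e0) ^ 2 := by
    intro p hp
    have := hG.eqn p hp
    rwa [hpd0 p hp.2, hpd2 p hp.2] at this
  have hlin : ∀ (p : ℝ × ℝ × ℝ) (γ : ℝ → ℝ × ℝ × ℝ) (t : ℝ) (v w : ℝ × ℝ × ℝ), γ t = p → p ∈ Ω →
      HasDerivAt γ v t →
      HasDerivAt (fun t => fderiv ℝ G (γ t) w) (fderiv ℝ (fderiv ℝ G) p v w) t := by
    intro p γ t v w hp hpΩ hγ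
    subst hp
    have h1 := HasFDerivAt.comp_hasDerivAt t (hDd _ hpΩ) hγ
    have h2 := h1.clm_apply (hasDerivAt_const t w)
    simpa using h2
  have hcross : ∀ p ∈ burgersDom R, fderiv ℝ (fderiv ℝ G) p e2 e0 =
      fderiv ℝ G p e0 * fderiv ℝ (fderiv ℝ G) p e0 e0 := by
    intro p hp
    have hsymm : fderiv ℝ (fderiv ℝ G) p e2 e0 = fderiv ℝ (fderiv ℝ G) p e0 e2 :=
      (hGat p hp.2).isSymmSndFDerivAt (by simp) e2 e0
    rw [hsymm]
    have h1 := hlin p (fun s => (s, p.2.1, p.2.2)) p.1 e0 e2 rfl hp.2 (hl0 p)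
    have h2 := hlin p (fun s => (s, p.2.1, p.2.2)) p.1 e0 e0 rfl hp.2 (hl0 p)
    have h3 : (fun s : ℝ => fderiv ℝ G (s, p.2.1, p.2.2) e2) =
        fun s : ℝ => 1 / 2 * (fderiv ℝ G (s, p.2.1, p.2.2) e0) ^ 2 := by
      funext s
      exact heq _ hp
    rw [h3] at h1
    have h4 := h1.unique ((h2.pow 2).const_mul (1 / 2))
    rw [h4]
    simp
    ring
  set ρ := rOf R (σ, α) with hρ
  let γ : ℝ → ℝ × ℝ × ℝ := fun t => (σ - t * ρ, α, t)
  have hγ : ∀ t, HasDerivAt γ (-ρ, 0, 1) t := fun t => by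
    have : HasDerivAt (fun t : ℝ => σ - t * ρ) (-ρ) t := by
      simpa using ((hasDerivAt_id t).mul_const ρ).const_sub σ
    exact this.prodMk ((hasDerivAt_const _ _).prodMk (hasDerivAt_id _))
  have hγc : Continuous γ := continuous_iff_continuousAt.2 fun t => (hγ t).continuousAt
  have hv : ((-ρ, 0, 1) : ℝ × ℝ × ℝ) = (-ρ) • e0 + e2 := by simp [e0, e2]
  have hmem : ∀ t ∈ Icc 0 τ, γ t ∈ burgersDom R := fun t ht => ⟨ht.1, ht.2.trans_lt hτ⟩
  have hmem' : ∀ t ∈ Icc 0 τ, γ t ∈ Ω := fun t ht => (hmem t ht).2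
  have hw : ∀ t ∈ Icc 0 τ, HasDerivAt (fun t => fderiv ℝ G (γ t) e0 - ρ)
      ((fderiv ℝ G (γ t) e0 - ρ) * fderiv ℝ (fderiv ℝ G) (γ t) e0 e0) t := by
    intro t ht
    have h1 := (hlin (γ t) γ t _ e0 rfl (hmem' t ht) (hγ t)).sub_const ρ
    refine HasDerivAt.congr_deriv h1 ?_
    rw [hv]
    simp only [map_add, map_smul, ContinuousLinearMap.add_apply, ContinuousLinearMap.smul_apply,
      hcross _ (hmem t ht), smul_eq_mul]
    ring
  obtain ⟨K, hK⟩ := (isCompact_Icc (a := (0 : ℝ)) (b := τ)).exists_bound_of_continuousOn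
    (f := fun t => fderiv ℝ (fderiv ℝ G) (γ t) e0 e0) (by
      intro t ht
      apply ContinuousAt.continuousWithinAt
      have : ContinuousAt (fun t => fderiv ℝ (fderiv ℝ G) (γ t)) t :=
        ContinuousAt.comp (f := γ) (hDc _ (hmem' t ht)) hγc.continuousAt
      exact (this.clm_apply continuousAt_const).clm_apply continuousAt_const)
  have hstart : fderiv ℝ G (γ 0) e0 - ρ = 0 := by
    have h0m := hmem' 0 ⟨le_rfl, h0⟩
    rw [← hpd0 _ h0m]
    simp only [pd, if_true, γ, hρ, rOf, hG.init]
    simp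
  have hzero := eq_zero_of_abs_deriv_le_mul_abs_self_of_eq_zero_right (K := K)
    (f := fun t => fderiv ℝ G (γ t) e0 - ρ)
    (fun t ht => (hw t ht).continuousAt.continuousWithinAt)
    (fun t ht => (hw t (Ico_subset_Icc_self ht)).hasDerivWithinAt) hstart (by
      intro t ht
      rw [norm_mul, mul_comm]
      exact mul_le_mul_of_nonneg_right (hK t (Ico_subset_Icc_self ht)) (norm_nonneg _))
  have hu : ∀ t ∈ Icc 0 τ, fderiv ℝ G (γ t) e0 = ρ := fun t ht => sub_eq_zero.1 (hzero t ht)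
  refine ⟨?_, ?_⟩
  · rw [hpd0 _ (hmem' τ ⟨h0, le_rfl⟩)]
    exact hu τ ⟨h0, le_rfl⟩
  · have hH : ∀ t ∈ Icc 0 τ, HasDerivAt (fun t => G (γ t) - (R σ α - t * ρ ^ 2 / 2)) 0 t := by
      intro t ht
      have h1 := HasFDerivAt.comp_hasDerivAt t (hGd _ (hmem' t ht)) (hγ t)
      have h2 : HasDerivAt (fun t : ℝ => R σ α - t * ρ ^ 2 / 2) (-(ρ ^ 2 / 2)) t := by
        simpa using (((hasDerivAt_id t).mul_const (ρ ^ 2)).div_const 2).const_sub (R σ α)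
      have h3 := h1.sub h2
      refine HasDerivAt.congr_deriv h3 ?_
      rw [hv]
      simp only [map_add, map_smul, heq _ (hmem t ht), hu t ht, smul_eq_mul]
      ring
    have h4 := eq_zero_of_abs_deriv_le_mul_abs_self_of_eq_zero_right (K := 0)
      (f := fun t => G (γ t) - (R σ α - t * ρ ^ 2 / 2)) (f' := fun _ => 0)
      (fun t ht => (hH t ht).continuousAt.continuousWithinAt)
      (fun t ht => (hH t (Ico_subset_Icc_self ht)).hasDerivWithinAt)
      (by simp [γ, hG.init]) (by simp) τ ⟨h0, le_rfl⟩
    exact sub_eq_zero.1 h4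

/-- **Solution of the profile (Burgers-type) equation (2.1.1)**: there is exactly one `C²`
solution `G` of `∂_τ G = ½(∂_σ G)²` on `ℝ × ℝ × [0, 1/m)` with `G(·,·,0) = R`; it is `C^∞`
and `2π`-periodic in `α`; the characteristic map `σ ↦ σ − τ ∂_σR(σ,α)` is a `C^∞`
diffeomorphism of `ℝ` for each `τ ∈ [0, 1/m)` and `α`; and
`∂_σG(σ − τ ∂_σR(σ,α), α, τ) = ∂_σR(σ,α)`. -/
theorem burgers_profile (R : ℝ → ℝ → ℝ)
    (hsm : ContDiff ℝ (⊤ : ℕ∞) (fun q : ℝ × ℝ => R q.1 q.2))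
    (hper : ∀ σ α : ℝ, R σ (α + 2 * Real.pi) = R σ α)
    (hbd : AllDerivBounded R)
    (hbdd : BddAbove (Set.range fun p : ℝ × ℝ => d2R R p.1 p.2))
    (hm : 0 < mOf R) :
    (∃ G : ℝ × ℝ × ℝ → ℝ, IsBurgersSol R G ∧
      ContDiffOn ℝ (⊤ : ℕ∞) G {p : ℝ × ℝ × ℝ | p.2.2 < (mOf R)⁻¹} ∧
      ∀ σ α τ : ℝ, G (σ, α + 2 * Real.pi, τ) = G (σ, α, τ)) ∧
    (∀ G₁ G₂ : ℝ × ℝ × ℝ → ℝ, IsBurgersSol R G₁ → IsBurgersSol R G₂ →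
      Set.EqOn G₁ G₂ (burgersDom R)) ∧
    (∀ τ ∈ Set.Ico (0 : ℝ) (mOf R)⁻¹, ∀ α : ℝ,
      ∃ e : ℝ ≃ ℝ,
        (∀ σ : ℝ, e σ = σ - τ * deriv (fun σ' => R σ' α) σ) ∧
        ContDiff ℝ (⊤ : ℕ∞) (e : ℝ → ℝ) ∧ ContDiff ℝ (⊤ : ℕ∞) (e.symm : ℝ → ℝ)) ∧
    (∀ G : ℝ × ℝ × ℝ → ℝ, IsBurgersSol R G →
      ∀ σ α : ℝ, ∀ τ ∈ Set.Ico (0 : ℝ) (mOf R)⁻¹,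
        pd 0 G (σ - τ * deriv (fun σ' => R σ' α) σ, α, τ) =
          deriv (fun σ' => R σ' α) σ) := by
  have hr := rOf_smooth R hsm
  have hR1 := rOf_hasDerivAt R hsm
  have hR2 := d2R_hasDerivAt R hsm
  obtain ⟨C, hC⟩ := rOf_bdd R hsm hbd
  obtain ⟨B, hB0, hB⟩ := d2R_bdd R hsm hbd
  set T := (mOf R)⁻¹ with hT
  have hposd : ∀ t, 0 ≤ t → t < T → ∀ s α, 0 < 1 - t * d2R R s α := by
    intro t h0 ht s α
    have h1 : d2R R s α ≤ mOf R := le_csSup hbdd ⟨(s, α), rfl⟩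
    have h2 : t * mOf R < 1 := by
      rw [hT, ← one_div, lt_div_iff₀ hm] at ht
      exact ht
    nlinarith
  obtain ⟨c, hc, hcid, hcpos⟩ := exists_cutoff B T hB0 (d2R R) (fun s α => (abs_le.1 (hB s α)).1)
    hposd
  have hceq : ∀ t, 0 ≤ t → c t = t := fun t ht => (hcid t ht).eq_of_nhds
  let S : ℝ × ℝ × ℝ → ℝ := fun p =>
    Function.invFun (fun s => s - c p.2.2 * rOf R (s, p.2.1)) p.1
  have hS : ∀ p : ℝ × ℝ × ℝ, S p - c p.2.2 * rOf R (S p, p.2.1) = p.1 := fun p =>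
    Function.rightInverse_invFun (char_surj (rOf R) hr.continuous C hC (c p.2.2) p.2.1) p.1
  have hSs : ContDiffOn ℝ (⊤ : ℕ∞) S {p | p.2.2 < T} :=
    S_smooth (rOf R) hr (d2R R) hR2 c hc T hcpos S (fun p _ => hS p)
  have hopen : IsOpen {p : ℝ × ℝ × ℝ | p.2.2 < T} := isOpen_lt (by fun_prop) (by fun_prop)
  have hSat : ∀ p : ℝ × ℝ × ℝ, p.2.2 < T → DifferentiableAt ℝ S p := fun p hp =>
    (hSs.contDiffAt (hopen.mem_nhds hp)).differentiableAt (by simp)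
  have hrper : ∀ s α, rOf R (s, α + 2 * Real.pi) = rOf R (s, α) := by
    intro s α
    simp only [rOf, hper]
  refine ⟨?_, ?_, ?_, ?_⟩
  · let G : ℝ × ℝ × ℝ → ℝ := fun p =>
      R (S p) p.2.1 - c p.2.2 / 2 * (rOf R (S p, p.2.1)) ^ 2
    have hGs : ContDiffOn ℝ (⊤ : ℕ∞) G {p : ℝ × ℝ × ℝ | p.2.2 < T} := by
      have h1 : ContDiffOn ℝ (⊤ : ℕ∞) (fun p : ℝ × ℝ × ℝ => (S p, p.2.1))
          {p : ℝ × ℝ × ℝ | p.2.2 < T} :=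
        hSs.prodMk (by fun_prop)
      have h2 := hsm.comp_contDiffOn h1
      have h3 := hr.comp_contDiffOn h1
      have h4 : ContDiffOn ℝ (⊤ : ℕ∞) (fun p : ℝ × ℝ × ℝ => c p.2.2 / 2)
          {p : ℝ × ℝ × ℝ | p.2.2 < T} := by fun_prop
      exact h2.sub (h4.mul (h3.pow 2))
    refine ⟨G, ⟨contDiffOn_infty.1 hGs 2, ?_, ?_⟩, hGs, ?_⟩
    · rintro ⟨σ, α, τ⟩ ⟨h0, hτ⟩
      simp only at h0 hτ
      have hl0 : HasDerivAt (fun s : ℝ => ((s, α, τ) : ℝ × ℝ × ℝ)) (1, 0, 0) σ :=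
        (hasDerivAt_id _).prodMk ((hasDerivAt_const _ _).prodMk (hasDerivAt_const _ _))
      have hl2 : HasDerivAt (fun s : ℝ => ((σ, α, s) : ℝ × ℝ × ℝ)) (0, 0, 1) τ :=
        (hasDerivAt_const _ _).prodMk ((hasDerivAt_const _ _).prodMk (hasDerivAt_id _))
      have hSd := (hSat (σ, α, τ) hτ).hasFDerivAt
      have hS0 : HasDerivAt (fun s => S (s, α, τ)) (fderiv ℝ S (σ, α, τ) (1, 0, 0)) σ :=
        HasFDerivAt.comp_hasDerivAt (f := fun s : ℝ => ((s, α, τ) : ℝ × ℝ × ℝ)) σ hSd hl0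
      have hS2 : HasDerivAt (fun s => S (σ, α, s)) (fderiv ℝ S (σ, α, τ) (0, 0, 1)) τ :=
        HasFDerivAt.comp_hasDerivAt (f := fun s : ℝ => ((σ, α, s) : ℝ × ℝ × ℝ)) τ hSd hl2
      set A := fderiv ℝ S (σ, α, τ) (1, 0, 0)
      set D := fderiv ℝ S (σ, α, τ) (0, 0, 1)
      have hc1 : HasDerivAt c 1 τ := (hasDerivAt_id τ).congr_of_eventuallyEq (hcid τ h0)
      set z := S (σ, α, τ) with hz
      set ρ := rOf R (z, α) with hρ
      set d := d2R R z α with hd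
      have hr0 : HasDerivAt (fun s => rOf R (S (s, α, τ), α)) (d * A) σ :=
        HasDerivAt.comp (h₂ := fun x => rOf R (x, α)) σ (hR2 z α) hS0
      have hr2 : HasDerivAt (fun s => rOf R (S (σ, α, s), α)) (d * D) τ :=
        HasDerivAt.comp (h₂ := fun x => rOf R (x, α)) τ (hR2 z α) hS2
      have hq0 : HasDerivAt (fun s => R (S (s, α, τ)) α) (ρ * A) σ :=
        HasDerivAt.comp (h₂ := fun x => R x α) σ (hR1 z α) hS0
      have hq2 : HasDerivAt (fun s => R (S (σ, α, s)) α) (ρ * D) τ :=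
        HasDerivAt.comp (h₂ := fun x => R x α) τ (hR1 z α) hS2
      have hcτ := hceq τ h0
      have e1 : A - c τ * (d * A) = 1 := by
        have h1 := hS0.sub (hr0.const_mul (c τ))
        refine h1.unique ((hasDerivAt_id σ).congr_of_eventuallyEq (Eventually.of_forall ?_))
        intro s
        exact hS (s, α, τ)
      have e2 : D - (1 * ρ + c τ * (d * D)) = 0 := by
        have h1 := hS2.sub (hc1.mul hr2)
        refine h1.unique ((hasDerivAt_const τ σ).congr_of_eventuallyEq (Eventually.of_forall ?_))
        intro s
        exact hS (σ, α, s)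
      have g0 := hq0.sub ((hr0.pow 2).const_mul (c τ / 2))
      have g2 := hq2.sub ((hc1.div_const 2).mul (hr2.pow 2))
      have p0 : pd 0 G (σ, α, τ) = ρ := by
        have : pd 0 G (σ, α, τ) = deriv (fun s => G (s, α, τ)) σ := by simp [pd]
        rw [this]
        refine Eq.trans (HasDerivAt.deriv g0) ?_
        simp only [← hz, ← hρ]
        push_cast
        linear_combination ρ * e1
      have p2 : pd 2 G (σ, α, τ) = ρ ^ 2 / 2 := by
        have : pd 2 G (σ, α, τ) = deriv (fun s => G (σ, α, s)) τ := by simp [pd]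
        rw [this]
        refine Eq.trans (HasDerivAt.deriv g2) ?_
        simp only [← hz, ← hρ, Pi.pow_apply]
        push_cast
        linear_combination ρ * e2
      rw [p0, p2]
      ring
    · intro σ α
      have h1 := hS (σ, α, 0)
      have h2 := hceq 0 le_rfl
      simp only [h2, zero_mul, sub_zero] at h1
      simp only [G, h1, h2]
      simp
    · intro σ α τ
      have h1 : S (σ, α + 2 * Real.pi, τ) = S (σ, α, τ) := by
        simp only [S, hrper]
      simp only [G, h1, hrper, hper]
  · rintro G₁ G₂ h₁ h₂ ⟨x, α, τ⟩ ⟨h0, hτ⟩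
    simp only at h0 hτ
    obtain ⟨σ, hσ⟩ := char_surj (rOf R) hr.continuous C hC τ α x
    simp only at hσ
    rw [← hσ, (along_char R hsm G₁ h₁ σ α τ h0 hτ).2, (along_char R hsm G₂ h₂ σ α τ h0 hτ).2]
  · intro τ hτ α
    have hcτ := hceq τ hτ.1
    have hinj := (char_strictMono (rOf R) (d2R R) hR2 τ α
      (fun s => hposd τ hτ.1 hτ.2 s α)).injective
    have hS' : ∀ x, S (x, α, τ) - τ * rOf R (S (x, α, τ), α) = x := fun x => by
      have := hS (x, α, τ)
      simpa only [hcτ] using this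
    refine ⟨⟨fun s => s - τ * rOf R (s, α), fun x => S (x, α, τ), fun s => hinj (hS' _), hS'⟩,
      fun σ => rfl, ?_, ?_⟩
    · show ContDiff ℝ (⊤ : ℕ∞) (fun s => s - τ * rOf R (s, α))
      fun_prop
    · show ContDiff ℝ (⊤ : ℕ∞) (fun x => S (x, α, τ))
      have h1 : ContDiff ℝ (⊤ : ℕ∞) (fun x : ℝ => ((x, α, τ) : ℝ × ℝ × ℝ)) := by fun_prop
      exact hSs.comp_contDiff h1 (fun x => hτ.2)
  · intro G hG σ α τ hτ
    exact (along_char R hsm G hG σ α τ hτ.1 hτ.2).1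

end
end

section
/- Assume in addition that the supremum m of ∂_σ²R is attained at (σ₀,α₀), is attained only at the points (σ₀, α₀ + 2kπ), k ∈ ℤ, and that the Hessian matrix of ∂_σ²R at (σ₀,α₀) is negative definite. Let G be the unique C² solution on ℝ × ℝ × [0, 1/m) of ∂_τ G = (1/2)(∂_σ G)² with G(·,·,0) = R. Then for every τ ∈ (0, 1/m): sup_{(σ,α)} ∂_σ²G(σ,α,τ) = m/(1 − τm), equivalently (sup_{(σ,α)} ∂_σ²G(σ,α,τ))^{−1} = 1/m − τ; this supremum is attained exactly at the points (σ₀ − τ·∂_σR(σ₀,α₀), α₀ + 2kπ), k ∈ ℤ; and the Hessian of (σ,α) ↦ ∂_σ²G(σ,α,τ) at these points is negative definite. -/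
noncomputable section

/-- The Hessian of `f` at `(σ₀, α₀)` is negative definite (2 × 2 criterion). -/
def NegDefHess (f : ℝ → ℝ → ℝ) (σ₀ α₀ : ℝ) : Prop :=
  iteratedDeriv 2 (fun σ => f σ α₀) σ₀ < 0 ∧
  0 < iteratedDeriv 2 (fun σ => f σ α₀) σ₀ * iteratedDeriv 2 (fun α => f σ₀ α) α₀ -
      (deriv (fun α => deriv (fun σ => f σ α) σ₀) α₀) ^ 2


lemma aux_gron (h b : ℝ → ℝ) (T : ℝ) (hb : ContinuousOn b (Set.Icc 0 T))
    (hd : ∀ t ∈ Set.Icc 0 T, HasDerivAt h (b t * h t) t) (h0 : h 0 = 0) :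
    ∀ t ∈ Set.Icc 0 T, h t = 0 := by
  obtain ⟨K, hK⟩ := isCompact_Icc.exists_bound_of_continuousOn hb
  intro t ht
  have := norm_le_gronwallBound_of_norm_deriv_right_le (f := h) (f' := fun t => b t * h t)
    (δ := 0) (K := K) (ε := 0) (a := 0) (b := T)
    (fun t ht => (hd t ht).continuousAt.continuousWithinAt)
    (fun t ht => (hd t ⟨ht.1, ht.2.le⟩).hasDerivWithinAt) (by simp [h0])
    (fun t ht => by
      rw [norm_mul, add_zero]
      exact mul_le_mul_of_nonneg_right (hK t ⟨ht.1, ht.2.le⟩) (norm_nonneg _)) t ht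
  rw [gronwallBound_ε0_δ0] at this
  exact norm_le_zero_iff.mp this

def D0 (f : ℝ × ℝ → ℝ) (q : ℝ × ℝ) : ℝ := fderiv ℝ f q (1, 0)
def D1 (f : ℝ × ℝ → ℝ) (q : ℝ × ℝ) : ℝ := fderiv ℝ f q (0, 1)

lemma D0_smooth {f : ℝ × ℝ → ℝ} (hf : ContDiff ℝ (⊤ : ℕ∞) f) : ContDiff ℝ (⊤ : ℕ∞) (D0 f) :=
  (hf.fderiv_right (m := (⊤ : ℕ∞)) (by simp)).clm_apply contDiff_const
lemma D1_smooth {f : ℝ × ℝ → ℝ} (hf : ContDiff ℝ (⊤ : ℕ∞) f) : ContDiff ℝ (⊤ : ℕ∞) (D1 f) :=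
  (hf.fderiv_right (m := (⊤ : ℕ∞)) (by simp)).clm_apply contDiff_const
lemma smooth_diff {f : ℝ × ℝ → ℝ} (hf : ContDiff ℝ (⊤ : ℕ∞) f) : Differentiable ℝ f :=
  hf.differentiable (by simp)

lemma chain2 {f : ℝ × ℝ → ℝ} {a b : ℝ → ℝ} {a' b' t : ℝ}
    (hf : DifferentiableAt ℝ f (a t, b t)) (ha : HasDerivAt a a' t) (hb : HasDerivAt b b' t) :
    HasDerivAt (fun t => f (a t, b t)) (D0 f (a t, b t) * a' + D1 f (a t, b t) * b') t := by
  have := hf.hasFDerivAt.comp_hasDerivAt t (ha.prodMk hb)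
  refine this.congr_deriv ?_
  have e : ((a', b') : ℝ × ℝ) = a' • (1, 0) + b' • (0, 1) := by ext <;> simp
  rw [e, map_add, map_smul, map_smul]
  simp [D0, D1, mul_comm]

lemma deriv_D0 {f : ℝ × ℝ → ℝ} (hf : Differentiable ℝ f) (x a : ℝ) :
    deriv (fun s => f (s, a)) x = D0 f (x, a) := by
  have := (chain2 (hf _) (hasDerivAt_id x) (hasDerivAt_const x a)).deriv
  simpa using this
lemma deriv_D1 {f : ℝ × ℝ → ℝ} (hf : Differentiable ℝ f) (x a : ℝ) :
    deriv (fun s => f (x, s)) a = D1 f (x, a) := by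
  have := (chain2 (hf _) (hasDerivAt_const a x) (hasDerivAt_id a)).deriv
  simpa using this

lemma d2R_eq {R : ℝ → ℝ → ℝ} (hsm : ContDiff ℝ (⊤ : ℕ∞) (fun q : ℝ × ℝ => R q.1 q.2)) (σ α : ℝ) :
    d2R R σ α = D0 (D0 (fun q : ℝ × ℝ => R q.1 q.2)) (σ, α) := by
  unfold d2R
  rw [iteratedDeriv_succ, iteratedDeriv_one]
  have : deriv (fun σ' => R σ' α) = fun s => D0 (fun q : ℝ × ℝ => R q.1 q.2) (s, α) := by
    ext x
    exact deriv_D0 (smooth_diff hsm) x α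
  rw [this, deriv_D0 (smooth_diff (D0_smooth hsm))]

/-- second derivatives of the pushed-forward function -/
lemma hess_push {r u : ℝ × ℝ → ℝ} (hr : ContDiff ℝ (⊤ : ℕ∞) r) (hu : u = D0 r)
    {τ : ℝ} (hpos : ∀ q, 0 < 1 - τ * u q) {s : ℝ × ℝ → ℝ} (hs : Differentiable ℝ s)
    (hsr : ∀ q, s q - τ * r (s q, q.2) = q.1) {F : ℝ → ℝ → ℝ}
    (hF : ∀ y a, F y a = u (s (y, a), a) / (1 - τ * u (s (y, a), a)))
    {σ₁ α₁ y₁ : ℝ} (hy : s (y₁, α₁) = σ₁) (h0 : D0 u (σ₁, α₁) = 0) (h1 : D1 u (σ₁, α₁) = 0)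
    (hN : NegDefHess (fun σ α => u (σ, α)) σ₁ α₁) : NegDefHess F y₁ α₁ := by
  have hus : ContDiff ℝ (⊤ : ℕ∞) u := hu ▸ D0_smooth hr
  have ud := smooth_diff hus
  have rd := smooth_diff hr
  have u0d := smooth_diff (D0_smooth hus)
  have u1d := smooth_diff (D1_smooth hus)
  have r1d := smooth_diff (D1_smooth hr)
  -- derivatives of s along the lines
  have hs0 : ∀ y a, HasDerivAt (fun y => s (y, a)) (1 / (1 - τ * u (s (y, a), a))) y := by
    intro y a
    have h := chain2 (hs (y, a)) (hasDerivAt_id y) (hasDerivAt_const y a)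
    have h' := chain2 (rd (s (y, a), a)) h (hasDerivAt_const y a)
    have h2 := h.sub (h'.const_mul τ)
    have h3 : HasDerivAt (fun y : ℝ => y) (1 : ℝ) y := hasDerivAt_id y
    have e := h2.unique (h3.congr_of_eventuallyEq (Filter.Eventually.of_forall fun z => hsr (z, a)))
    simp only [← hu, id] at e h
    have hp := hpos (s (y, a), a)
    refine h.congr_deriv ?_
    field_simp
    linarith
  have hs1 : ∀ y a, HasDerivAt (fun a => s (y, a))
      (τ * D1 r (s (y, a), a) / (1 - τ * u (s (y, a), a))) a := by
    intro y a
    have h := chain2 (hs (y, a)) (hasDerivAt_const a y) (hasDerivAt_id a)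
    have h' := chain2 (rd (s (y, a), a)) h (hasDerivAt_id a)
    have h2 := h.sub (h'.const_mul τ)
    have h3 : HasDerivAt (fun _ : ℝ => y) (0 : ℝ) a := hasDerivAt_const a y
    have e := h2.unique (h3.congr_of_eventuallyEq (Filter.Eventually.of_forall fun z => hsr (y, z)))
    simp only [← hu, id] at e h
    have hp := hpos (s (y, a), a)
    refine h.congr_deriv ?_
    field_simp
    linarith
  have hFe : F = fun y a => u (s (y, a), a) / (1 - τ * u (s (y, a), a)) := by
    ext y a; exact hF y a
  have hF0 : ∀ y a, HasDerivAt (fun y => F y a)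
      ((fun q => D0 u q / (1 - τ * u q) ^ 3) (s (y, a), a)) y := by
    intro y a
    have h := chain2 (ud (s (y, a), a)) (hs0 y a) (hasDerivAt_const y a)
    have hp := hpos (s (y, a), a)
    have h2 := h.div ((h.const_mul τ).const_sub 1) hp.ne'
    rw [hFe]
    refine h2.congr_deriv ?_
    field_simp
    ring
  have hF1 : ∀ y a, HasDerivAt (fun a => F y a)
      ((fun q => (D1 u q * (1 - τ * u q) + D0 u q * (τ * D1 r q)) / (1 - τ * u q) ^ 3)
        (s (y, a), a)) a := by
    intro y a
    have h := chain2 (ud (s (y, a), a)) (hs1 y a) (hasDerivAt_id a)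
    have hp := hpos (s (y, a), a)
    have h2 := h.div ((h.const_mul τ).const_sub 1) hp.ne'
    rw [hFe]
    refine h2.congr_deriv ?_
    simp only [id]
    field_simp
    ring
  have hp := hpos (σ₁, α₁)
  set d := 1 - τ * u (σ₁, α₁) with hd
  set k := τ * D1 r (σ₁, α₁) with hk
  set A := D0 (D0 u) (σ₁, α₁)
  set B := D1 (D0 u) (σ₁, α₁)
  set B' := D0 (D1 u) (σ₁, α₁)
  set C := D1 (D1 u) (σ₁, α₁)
  have hBB : B' = B := by
    have hsymm : IsSymmSndFDerivAt ℝ u (σ₁, α₁) :=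
      (hus.contDiffAt).isSymmSndFDerivAt (by
        rw [minSmoothness_of_isRCLikeNormedField]
        exact WithTop.coe_le_coe.2 (le_top : (2 : ℕ∞) ≤ ⊤))
    have hfd : DifferentiableAt ℝ (fderiv ℝ u) (σ₁, α₁) :=
      ((hus.fderiv_right (m := (⊤ : ℕ∞)) (by simp)).differentiable (by simp)) _
    have e1 : ∀ v w : ℝ × ℝ, fderiv ℝ (fun q => fderiv ℝ u q v) (σ₁, α₁) w =
        fderiv ℝ (fderiv ℝ u) (σ₁, α₁) w v := by
      intro v w
      have := hfd.hasFDerivAt.clm_apply (hasFDerivAt_const v (σ₁, α₁))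
      rw [this.fderiv]; simp
    show fderiv ℝ (fun q => fderiv ℝ u q (0, 1)) (σ₁, α₁) (1, 0) =
      fderiv ℝ (fun q => fderiv ℝ u q (1, 0)) (σ₁, α₁) (0, 1)
    rw [e1, e1]
    exact hsymm _ _
  -- Hypothesis in terms of A B C
  have hN' : A < 0 ∧ 0 < A * C - B ^ 2 := by
    have e0 : ∀ a, deriv (fun σ => u (σ, a)) = fun x => D0 u (x, a) := fun a => by
      ext x; exact deriv_D0 ud x a
    have e1 : ∀ x, deriv (fun a => u (x, a)) = fun a => D1 u (x, a) := fun x => by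
      ext a; exact deriv_D1 ud x a
    unfold NegDefHess at hN
    simp only [iteratedDeriv_succ, iteratedDeriv_zero, e0, e1] at hN
    rw [deriv_D0 u0d, deriv_D1 u1d, deriv_D1 u0d] at hN
    exact hN
  have hs0' := hs0 y₁ α₁
  have hs1' := hs1 y₁ α₁
  have pd3 : ∀ q, DifferentiableAt ℝ (fun q => (1 - τ * u q) ^ 3) q := fun q =>
    (((ud q).const_mul τ).const_sub 1).pow 3
  have c00 : deriv (fun y => deriv (fun y => F y α₁) y) y₁ = A / d ^ 4 := by
    have : (fun y => deriv (fun y => F y α₁) y) =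
      fun y => (D0 u (s (y, α₁), α₁)) / (1 - τ * u (s (y, α₁), α₁)) ^ 3 := by
      ext y; exact (hF0 y α₁).deriv
    rw [this]
    have h := chain2 (u0d (s (y₁, α₁), α₁)) hs0' (hasDerivAt_const y₁ α₁)
    have h' := chain2 (pd3 (s (y₁, α₁), α₁)) hs0' (hasDerivAt_const y₁ α₁)
    have := (h.div h' (pow_ne_zero 3 (hpos _).ne')).deriv
    refine this.trans ?_
    rw [hy, h0, ← hd]
    field_simp
    ring
  have c01 : deriv (fun a => deriv (fun y => F y a) y₁) α₁ = (A * k + B * d) / d ^ 4 := by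
    have : (fun a => deriv (fun y => F y a) y₁) =
      fun a => (D0 u (s (y₁, a), a)) / (1 - τ * u (s (y₁, a), a)) ^ 3 := by
      ext a; exact (hF0 y₁ a).deriv
    rw [this]
    have h := chain2 (u0d (s (y₁, α₁), α₁)) hs1' (hasDerivAt_id α₁)
    have h' := chain2 (pd3 (s (y₁, α₁), α₁)) hs1' (hasDerivAt_id α₁)
    have := (h.div h' (pow_ne_zero 3 (hpos _).ne')).deriv
    refine this.trans ?_
    simp only [id]
    rw [hy, h0, ← hd, ← hk]
    field_simp
    ring
  have c11 : deriv (fun a => deriv (fun a => F y₁ a) a) α₁ =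
      (A * k ^ 2 + 2 * B * d * k + C * d ^ 2) / d ^ 4 := by
    have : (fun a => deriv (fun a => F y₁ a) a) =
      fun a => (D1 u (s (y₁, a), a) * (1 - τ * u (s (y₁, a), a)) +
        D0 u (s (y₁, a), a) * (τ * D1 r (s (y₁, a), a))) / (1 - τ * u (s (y₁, a), a)) ^ 3 := by
      ext a; exact (hF1 y₁ a).deriv
    rw [this]
    have h := chain2 (u0d (s (y₁, α₁), α₁)) hs1' (hasDerivAt_id α₁)
    have hb := chain2 (u1d (s (y₁, α₁), α₁)) hs1' (hasDerivAt_id α₁)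
    have hc := chain2 (ud (s (y₁, α₁), α₁)) hs1' (hasDerivAt_id α₁)
    have hr := chain2 (r1d (s (y₁, α₁), α₁)) hs1' (hasDerivAt_id α₁)
    have h' := chain2 (pd3 (s (y₁, α₁), α₁)) hs1' (hasDerivAt_id α₁)
    have := (((hb.mul ((hc.const_mul τ).const_sub 1)).add (h.mul (hr.const_mul τ))).div h'
      (pow_ne_zero 3 (hpos _).ne')).deriv
    refine this.trans ?_
    simp only [id, Pi.mul_apply, Pi.add_apply]
    rw [hy, h0, h1, ← hd, ← hk, show D0 (D1 u) (σ₁, α₁) = D1 (D0 u) (σ₁, α₁) from hBB]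
    simp only [A, B, C]
    field_simp
    ring
  unfold NegDefHess
  simp only [iteratedDeriv_succ, iteratedDeriv_zero]
  rw [c00, c01, c11]
  refine ⟨div_neg_of_neg_of_pos hN'.1 (by positivity), ?_⟩
  have : A / d ^ 4 * ((A * k ^ 2 + 2 * B * d * k + C * d ^ 2) / d ^ 4) -
      ((A * k + B * d) / d ^ 4) ^ 2 = (A * C - B ^ 2) / d ^ 6 := by
    field_simp
    ring
  rw [this]
  exact div_pos hN'.2 (by positivity)

section ThreeD

lemma curve3 {f : ℝ × ℝ × ℝ → ℝ} {f' : ℝ × ℝ × ℝ →L[ℝ] ℝ} {a b c : ℝ → ℝ} {a' b' c' t : ℝ}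
    (hf : HasFDerivAt f f' (a t, b t, c t)) (ha : HasDerivAt a a' t) (hb : HasDerivAt b b' t)
    (hc : HasDerivAt c c' t) :
    HasDerivAt (fun t => f (a t, b t, c t)) (f' (a', b', c')) t :=
  HasFDerivAt.comp_hasDerivAt t hf (ha.prodMk (hb.prodMk hc))

lemma char_key {R : ℝ → ℝ → ℝ} (hsm : ContDiff ℝ (⊤ : ℕ∞) (fun q : ℝ × ℝ => R q.1 q.2))
    (hm : 0 < mOf R) {G : ℝ × ℝ × ℝ → ℝ} (hG : IsBurgersSol R G) {τ : ℝ} (h0 : 0 ≤ τ)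
    (h1 : τ < (mOf R)⁻¹) :
    (∀ σ α, pd 0 G (σ - τ * D0 (fun q : ℝ × ℝ => R q.1 q.2) (σ, α), α, τ) =
      D0 (fun q : ℝ × ℝ => R q.1 q.2) (σ, α)) ∧
    Differentiable ℝ (fun q : ℝ × ℝ => pd 0 G (q.1, q.2, τ)) := by
  set U : Set (ℝ × ℝ × ℝ) := {p : ℝ × ℝ × ℝ | p.2.2 < (mOf R)⁻¹} with hU
  have hUo : IsOpen U := isOpen_lt (by fun_prop) continuous_const
  have hGd : ∀ p ∈ U, HasFDerivAt G (fderiv ℝ G p) p := fun p hp =>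
    ((hG.smooth.contDiffAt (hUo.mem_nhds hp)).differentiableAt (by simp)).hasFDerivAt
  have hfd : ContDiffOn ℝ 1 (fderiv ℝ G) U := hG.smooth.fderiv_of_isOpen hUo (by norm_num)
  have hGdd : ∀ p ∈ U, HasFDerivAt (fderiv ℝ G) (fderiv ℝ (fderiv ℝ G) p) p := fun p hp =>
    ((hfd.contDiffAt (hUo.mem_nhds hp)).differentiableAt (by simp)).hasFDerivAt
  have hcont : ContinuousOn (fderiv ℝ (fderiv ℝ G)) U := hfd.continuousOn_fderiv_of_isOpen hUo le_rfl
  have hsymm : ∀ p ∈ U, ∀ v w, fderiv ℝ (fderiv ℝ G) p v w = fderiv ℝ (fderiv ℝ G) p w v := 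
    fun p hp => (hG.smooth.contDiffAt (hUo.mem_nhds hp)).isSymmSndFDerivAt (by simp)
  have happ : ∀ p ∈ U, ∀ v : ℝ × ℝ × ℝ, HasFDerivAt (fun p => fderiv ℝ G p v)
      ((fderiv ℝ (fderiv ℝ G) p).flip v) p := by
    intro p hp v
    have := (hGdd p hp).clm_apply (hasFDerivAt_const v p)
    refine this.congr_fderiv ?_
    ext <;> simp
  have hpd0 : ∀ p ∈ U, pd 0 G p = fderiv ℝ G p (1, 0, 0) := by
    intro p hp
    simp only [pd, if_true]
    exact (curve3 (hGd p hp) (hasDerivAt_id p.1) (hasDerivAt_const _ _)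
      (hasDerivAt_const _ _)).deriv
  have hpd2 : ∀ p ∈ U, pd 2 G p = fderiv ℝ G p (0, 0, 1) := by
    intro p hp
    have e : pd 2 G p = deriv (fun s => G (p.1, p.2.1, s)) p.2.2 := by simp [pd]
    rw [e]
    exact (curve3 (hGd p hp) (hasDerivAt_const _ _) (hasDerivAt_const _ _)
      (hasDerivAt_id p.2.2)).deriv
  have hburg : ∀ p ∈ U, 0 ≤ p.2.2 → fderiv ℝ (fderiv ℝ G) p (0, 0, 1) (1, 0, 0) =
      fderiv ℝ G p (1, 0, 0) * fderiv ℝ (fderiv ℝ G) p (1, 0, 0) (1, 0, 0) := by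
    intro p hp hp0
    have c1 := curve3 (happ p hp (0, 0, 1)) (hasDerivAt_id p.1) (hasDerivAt_const _ p.2.1)
      (hasDerivAt_const _ p.2.2)
    have c2 := curve3 (happ p hp (1, 0, 0)) (hasDerivAt_id p.1) (hasDerivAt_const _ p.2.1)
      (hasDerivAt_const _ p.2.2)
    have c3 := (c2.pow 2).const_mul (1 / 2 : ℝ)
    have e := c1.unique (c3.congr_of_eventuallyEq (Filter.Eventually.of_forall fun z => by
      have hz : ((z, p.2.1, p.2.2) : ℝ × ℝ × ℝ) ∈ U := hp
      have := hG.eqn (z, p.2.1, p.2.2) ⟨hp0, hp⟩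
      rw [hpd0 _ hz, hpd2 _ hz] at this
      exact this))
    rw [hsymm p hp]
    simp only [ContinuousLinearMap.flip_apply, id] at e
    rw [e]
    simp
    ring
  have hinit : ∀ σ α, pd 0 G (σ, α, 0) = D0 (fun q : ℝ × ℝ => R q.1 q.2) (σ, α) := by
    intro σ α
    simp only [pd, if_true, hG.init]
    exact deriv_D0 (smooth_diff hsm) σ α
  constructor
  · intro σ α
    set ρ := D0 (fun q : ℝ × ℝ => R q.1 q.2) (σ, α) with hρ
    have hin : ∀ t ∈ Set.Icc 0 τ, ((σ - t * ρ, α, t) : ℝ × ℝ × ℝ) ∈ U := fun t ht =>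
      lt_of_le_of_lt ht.2 h1
    have := aux_gron (fun t => fderiv ℝ G (σ - t * ρ, α, t) (1, 0, 0) - ρ)
      (fun t => fderiv ℝ (fderiv ℝ G) (σ - t * ρ, α, t) (1, 0, 0) (1, 0, 0)) τ
      (by
        have : ContinuousOn (fun t : ℝ => fderiv ℝ (fderiv ℝ G) (σ - t * ρ, α, t))
            (Set.Icc 0 τ) :=
          hcont.comp (by fun_prop) hin
        exact (this.clm_apply continuousOn_const).clm_apply continuousOn_const)
      (by
        intro t ht
        have c := curve3 (happ _ (hin t ht) (1, 0, 0))
          (((hasDerivAt_id t).mul_const ρ).const_sub σ) (hasDerivAt_const t α) (hasDerivAt_id t)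
        refine (c.sub_const ρ).congr_deriv ?_
        have hb := hburg _ (hin t ht) ht.1
        have e : ((-(1 * ρ), 0, 1) : ℝ × ℝ × ℝ) = (-ρ) • (1, 0, 0) + (0, 0, 1) := by
          ext <;> simp
        rw [e, map_add, map_smul, ContinuousLinearMap.flip_apply, ContinuousLinearMap.flip_apply, hb,
          smul_eq_mul]
        ring)
      (by
        have := hinit σ α
        rw [hpd0 _ (show ((σ, α, 0) : ℝ × ℝ × ℝ) ∈ U from lt_of_le_of_lt h0 h1)] at this
        simp [this, hρ]) τ ⟨h0, le_rfl⟩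
    rw [hpd0 _ (hin τ ⟨h0, le_rfl⟩)]
    simpa [sub_eq_zero] using this
  · have : (fun q : ℝ × ℝ => pd 0 G (q.1, q.2, τ)) =
        fun q : ℝ × ℝ => fderiv ℝ G (q.1, q.2, τ) (1, 0, 0) := by
      ext q; exact hpd0 _ h1
    rw [this]
    intro q
    exact DifferentiableAt.comp (g := fun p => fderiv ℝ G p (1, 0, 0))
      (f := fun q : ℝ × ℝ => ((q.1, q.2, τ) : ℝ × ℝ × ℝ)) q
      (happ (q.1, q.2, τ) h1 (1, 0, 0)).differentiableAt (by fun_prop)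

end ThreeD

lemma per_int {f : ℝ → ℝ} (h : ∀ a, f (a + 2 * Real.pi) = f a) (k : ℤ) (a : ℝ) :
    f (a + 2 * Real.pi * k) = f a := by
  have : Function.Periodic f (2 * Real.pi) := h
  have := this.int_mul k a
  rwa [mul_comm (k : ℝ)] at this

lemma deriv_shift (f : ℝ → ℝ) (a c : ℝ) (h : ∀ x, f (x + c) = f x) :
    deriv f (a + c) = deriv f a := by
  rw [← deriv_comp_add_const]
  simp only [h]

lemma negDefHess_shift {f : ℝ → ℝ → ℝ} {c σ α : ℝ} (h : ∀ s a, f s (a + c) = f s a)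
    (hN : NegDefHess f σ α) : NegDefHess f σ (α + c) := by
  unfold NegDefHess at *
  have e1 : iteratedDeriv 2 (fun a => f σ a) (α + c) = iteratedDeriv 2 (fun a => f σ a) α := by
    simp only [iteratedDeriv_succ, iteratedDeriv_zero]
    exact deriv_shift _ _ _ fun x => deriv_shift _ _ _ fun x => h σ x
  have e2 : deriv (fun α => deriv (fun σ => f σ α) σ) (α + c) =
      deriv (fun α => deriv (fun σ => f σ α) σ) α :=
    deriv_shift _ _ _ fun x => by simp only [h]
  rw [e1, e2]
  simp only [h]
  exact hN

/-- **Propagation of the nondegenerate maximum under the Burgers flow** (cf. Section III.2.5):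
if `∂_σ²R` has its (positive, quadratic) maximum `m` exactly at the points `(σ₀, α₀ + 2kπ)`,
then for `0 < τ < 1/m` one has `sup ∂_σ²G(·,·,τ) = m/(1 − τm)`, attained exactly at
`(σ₀ − τ ∂_σR(σ₀,α₀), α₀ + 2kπ)`, with negative definite Hessian there. -/
theorem burgers_max_propagation (R : ℝ → ℝ → ℝ)
    (hsm : ContDiff ℝ (⊤ : ℕ∞) (fun q : ℝ × ℝ => R q.1 q.2))
    (hper : ∀ σ α : ℝ, R σ (α + 2 * Real.pi) = R σ α)
    (hbd : AllDerivBounded R)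
    (hbdd : BddAbove (Set.range fun p : ℝ × ℝ => d2R R p.1 p.2))
    (hm : 0 < mOf R) (σ₀ α₀ : ℝ)
    (hmax : d2R R σ₀ α₀ = mOf R)
    (honly : ∀ σ α : ℝ, d2R R σ α = mOf R → σ = σ₀ ∧ ∃ k : ℤ, α = α₀ + 2 * Real.pi * k)
    (hhess : NegDefHess (d2R R) σ₀ α₀) :
    ∀ G : ℝ × ℝ × ℝ → ℝ, IsBurgersSol R G →
      ∀ τ ∈ Set.Ioo (0 : ℝ) (mOf R)⁻¹,
        (sSup (Set.range fun p : ℝ × ℝ => pd 0 (pd 0 G) (p.1, p.2, τ)) =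
          mOf R / (1 - τ * mOf R)) ∧
        (∀ σ α : ℝ,
          pd 0 (pd 0 G) (σ, α, τ) = mOf R / (1 - τ * mOf R) ↔
            (σ = σ₀ - τ * deriv (fun σ' => R σ' α₀) σ₀ ∧
              ∃ k : ℤ, α = α₀ + 2 * Real.pi * k)) ∧
        (∀ k : ℤ,
          NegDefHess (fun σ α => pd 0 (pd 0 G) (σ, α, τ))
            (σ₀ - τ * deriv (fun σ' => R σ' α₀) σ₀) (α₀ + 2 * Real.pi * k)) := by
  intro G hG τ hτ
  obtain ⟨hτ0, hτ1⟩ := hτ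
  set m := mOf R with hmdef
  set Rf : ℝ × ℝ → ℝ := fun q => R q.1 q.2 with hRf
  set r := D0 Rf with hr
  set u := D0 r with hu
  have hrs : ContDiff ℝ (⊤ : ℕ∞) r := D0_smooth hsm
  have hus : ContDiff ℝ (⊤ : ℕ∞) u := D0_smooth hrs
  obtain ⟨hchar, hgd⟩ := char_key hsm hm hG hτ0.le hτ1
  have hd2 : ∀ σ α, d2R R σ α = u (σ, α) := d2R_eq hsm
  have hum : ∀ q, u q ≤ m := fun q => by
    rw [← hd2 q.1 q.2]
    exact le_csSup hbdd ⟨q, rfl⟩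
  have hτm : 0 < 1 - τ * m := by
    have := mul_lt_mul_of_pos_right hτ1 hm
    rw [inv_mul_cancel₀ hm.ne'] at this
    linarith
  have hpos : ∀ q, 0 < 1 - τ * u q := fun q => by
    have := mul_le_mul_of_nonneg_left (hum q) hτ0.le
    linarith
  set g : ℝ × ℝ → ℝ := fun q => pd 0 G (q.1, q.2, τ) with hg
  set s : ℝ × ℝ → ℝ := fun q => q.1 + τ * g q with hs
  have hsd : Differentiable ℝ s := differentiable_fst.add (hgd.const_mul τ)
  have hgr : ∀ σ α, g (σ - τ * r (σ, α), α) = r (σ, α) := hchar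
  have hsφ : ∀ σ α, s (σ - τ * r (σ, α), α) = σ := fun σ α => by
    simp only [hs, hgr]; ring
  obtain ⟨C, hC⟩ := hbd 1
  have hrb : ∀ q, |r q| ≤ C := fun q => by
    have h1 := hC q
    rw [norm_iteratedFDeriv_one] at h1
    have h2 := (fderiv ℝ Rf q).le_opNorm (1, 0)
    have h3 : ‖((1, 0) : ℝ × ℝ)‖ = 1 := by simp [Prod.norm_def]
    rw [h3, mul_one] at h2
    exact h2.trans h1
  have hsurj : ∀ y α, ∃ σ, σ - τ * r (σ, α) = y := by
    intro y α
    have hc : Continuous (fun σ => σ - τ * r (σ, α)) := by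
      have := hrs.continuous
      fun_prop
    have hC0 : 0 ≤ C := (abs_nonneg _).trans (hrb 0)
    have hle : y - τ * C ≤ y + τ * C := by nlinarith
    have := intermediate_value_Icc hle hc.continuousOn
    obtain ⟨σ, -, h⟩ := this (show y ∈ Set.Icc _ _ from ⟨by
        have := (abs_le.mp (hrb (y - τ * C, α))).1
        nlinarith, by
        have := (abs_le.mp (hrb (y + τ * C, α))).2
        nlinarith⟩)
    exact ⟨σ, h⟩
  have hsr : ∀ q, s q - τ * r (s q, q.2) = q.1 := by
    rintro ⟨y, α⟩
    obtain ⟨σ, rfl⟩ := hsurj y α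
    simp only [hsφ]
  have hF : ∀ y α, pd 0 (pd 0 G) (y, α, τ) = u (s (y, α), α) / (1 - τ * u (s (y, α), α)) := by
    intro y α
    have e : pd 0 (pd 0 G) (y, α, τ) = D0 g (y, α) := by
      have : pd 0 (pd 0 G) (y, α, τ) = deriv (fun x => g (x, α)) y := by
        simp [pd, hg]
      rw [this, deriv_D0 hgd]
    rw [e]
    obtain ⟨σ, rfl⟩ := hsurj y α
    rw [hsφ]
    have h1 := chain2 (smooth_diff hrs (σ, α)) (hasDerivAt_id σ) (hasDerivAt_const σ α)
    have h2 := chain2 (hgd (σ - τ * r (σ, α), α)) ((hasDerivAt_id σ).sub (h1.const_mul τ))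
      (hasDerivAt_const σ α)
    have h3 := h2.unique (h1.congr_of_eventuallyEq
      (Filter.Eventually.of_forall fun z => hgr z α))
    have hp := hpos (σ, α)
    simp only [← hu, id, Pi.sub_apply] at h3
    rw [eq_div_iff hp.ne']
    linarith
  have hmono : ∀ q, u q / (1 - τ * u q) ≤ m / (1 - τ * m) := fun q => by
    rw [div_le_div_iff₀ (hpos q) hτm]
    nlinarith [hum q]
  have heq : ∀ q, u q / (1 - τ * u q) = m / (1 - τ * m) ↔ u q = m := fun q => by
    rw [div_eq_div_iff (hpos q).ne' hτm.ne']
    constructor <;> intro h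
    · linarith
    · rw [h]
  have hRper : ∀ (k : ℤ) σ α, R σ (α + 2 * Real.pi * k) = R σ α := fun k σ α =>
    per_int (hper σ) k α
  have hrper : ∀ (k : ℤ) σ α, r (σ, α + 2 * Real.pi * k) = r (σ, α) := fun k σ α => by
    rw [hr, ← deriv_D0 (smooth_diff hsm), ← deriv_D0 (smooth_diff hsm)]
    simp only [hRf, hRper]
  have huper : ∀ (k : ℤ) σ α, d2R R σ (α + 2 * Real.pi * k) = d2R R σ α := fun k σ α => by
    simp only [d2R, hRper]
  have hrd : deriv (fun σ' => R σ' α₀) σ₀ = r (σ₀, α₀) := deriv_D0 (smooth_diff hsm) σ₀ α₀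
  rw [hrd]
  have hs0 : ∀ k : ℤ, s (σ₀ - τ * r (σ₀, α₀), α₀ + 2 * Real.pi * k) = σ₀ := fun k => by
    have := hsφ σ₀ (α₀ + 2 * Real.pi * k)
    rwa [hrper] at this
  have hu0 : ∀ k : ℤ, u (σ₀, α₀ + 2 * Real.pi * k) = m := fun k => by
    rw [← hd2, huper, hmax]
  have hiff : ∀ σ α : ℝ,
          pd 0 (pd 0 G) (σ, α, τ) = m / (1 - τ * m) ↔
            (σ = σ₀ - τ * r (σ₀, α₀) ∧ ∃ k : ℤ, α = α₀ + 2 * Real.pi * k) := by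
    intro σ α
    rw [hF, heq]
    constructor
    · intro h
      rw [← hd2] at h
      obtain ⟨h1, k, hk⟩ := honly _ _ h
      refine ⟨?_, k, hk⟩
      have := hsr (σ, α)
      simp only [hk, hrper] at this
      rw [hk] at h1
      exact (by simpa only [h1, hrper] using this : σ₀ - τ * r (σ₀, α₀) = σ).symm
    · rintro ⟨rfl, k, rfl⟩
      rw [hs0, hu0]
  refine ⟨?_, hiff, ?_⟩
  · apply IsGreatest.csSup_eq
    constructor
    · refine ⟨(σ₀ - τ * r (σ₀, α₀), α₀), ?_⟩
      exact (hiff _ _).2 ⟨rfl, 0, by simp⟩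
    · rintro _ ⟨q, rfl⟩
      simp only [hF]
      exact hmono _
  · intro k
    have hfz : fderiv ℝ u (σ₀, α₀ + 2 * Real.pi * k) = 0 := by
      apply IsLocalMax.fderiv_eq_zero
      exact Filter.Eventually.of_forall fun q => by rw [hu0]; exact hum q
    refine hess_push hrs hu hpos hsd hsr hF (hs0 k) (by simp [D0, hfz]) (by simp [D1, hfz]) ?_
    have e : (fun σ α => u (σ, α)) = d2R R := by
      ext σ α; exact (hd2 σ α).symm
    rw [e]
    exact negDefHess_shift (huper k) hhess

end
end

section
/- For every integer s̄ ≥ 0 there exists a Schwartz function ψ on ℝ³ with support contained in {(x,y,t) : t ≥ 0, x ≤ 0}, with ∫_{ℝ³} ψ = 1 and ∫_{ℝ³} z^β ψ(z) dz = 0 for all multi-indices β with 1 ≤ |β| ≤ s̄, such that the operators S_θ u = ψ_θ * u, where ψ_θ(z) = θ³ ψ(θz) and θ ≥ 1, satisfy: for all integers 0 ≤ s, s′ ≤ s̄ there is a constant C such that for all u with ‖u‖_{H^{s′}} < ∞ and all θ ≥ 1: (i) ‖S_θ u‖_{H^s} ≤ C‖u‖_{H^{s′}} if s ≤ s′; (ii)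 ‖S_θ u‖_{H^s} ≤ C·θ^{s−s′}‖u‖_{H^{s′}} if s ≥ s′; (iii) ‖u − S_θ u‖_{H^s} ≤ C·θ^{s−s′}‖u‖_{H^{s′}} if s ≤ s′; (iv) ‖(d/dθ) S_θ u‖_{H^s} ≤ C·θ^{s−s′−1}‖u‖_{H^{s′}}. -/
open MeasureTheory

noncomputable section

/-- Squared Sobolev `H^s` norm on `ℝ³` (equivalently summing over multi-indices of
order `≤ s`, here via the iterated total derivatives). -/
def SobSq (s : ℕ) (u : ℝ × ℝ × ℝ → ℝ) : ℝ :=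
  ∑ i ∈ Finset.range (s + 1), ∫ z : ℝ × ℝ × ℝ, ‖iteratedFDeriv ℝ i u z‖ ^ 2

/-- The smoothing operator `S_θ u = ψ_θ * u`, where `ψ_θ(z) = θ³ ψ(θ z)`. -/
def smoothOp (ψ : ℝ × ℝ × ℝ → ℝ) (θ : ℝ) (u : ℝ × ℝ × ℝ → ℝ) (z : ℝ × ℝ × ℝ) : ℝ :=
  ∫ w : ℝ × ℝ × ℝ, θ ^ 3 * ψ (θ • w) * u (z - w)


abbrev E3 := ℝ × ℝ × ℝ

instance instHaarR2 : (volume : Measure (ℝ × ℝ)).IsAddHaarMeasure :=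
  Measure.prod.instIsAddHaarMeasure (volume : Measure ℝ) (volume : Measure ℝ)

instance instHaarE3 : (volume : Measure E3).IsAddHaarMeasure :=
  Measure.prod.instIsAddHaarMeasure (volume : Measure ℝ) (volume : Measure (ℝ × ℝ))

def TT {F : Type} [NormedAddCommGroup F] [NormedSpace ℝ F]
    (K : E3 → ℝ) (θ : ℝ) (v : E3 → F) (z : E3) : F :=
  ∫ w, K w • v (z - θ⁻¹ • w)

section basic
variable {F : Type} [NormedAddCommGroup F] [NormedSpace ℝ F]

lemma aesm {f : E3 → F} (hf : Continuous f) : AEStronglyMeasurable f volume :=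
  hf.aestronglyMeasurable

lemma integrable_smul_of_cs {K : E3 → ℝ} (hK : Continuous K) (hKs : HasCompactSupport K)
    {f : E3 → F} (hf : Continuous f) : Integrable (fun w => K w • f w) :=
  (hK.smul hf).integrable_of_hasCompactSupport hKs.smul_right

lemma hasFDerivAt_TT {K : E3 → ℝ} (hK : Continuous K) (hKs : HasCompactSupport K) (θ : ℝ)
    {v : E3 → F} (hv : ContDiff ℝ 1 v) (z : E3) :
    HasFDerivAt (TT K θ v) (TT K θ (fderiv ℝ v) z) z := by
  have hc : Continuous (fun p : E3 × E3 => ‖K p.2 • fderiv ℝ v (p.1 - θ⁻¹ • p.2)‖) := by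
    have := hv.continuous_fderiv (by simp)
    fun_prop
  have hcv := hv.continuous
  have hcf := hv.continuous_fderiv (by simp)
  have hcomp : IsCompact (Metric.closedBall z 1 ×ˢ tsupport K) :=
    (isCompact_closedBall z 1).prod hKs
  obtain ⟨M, hM⟩ := hcomp.bddAbove_image hc.continuousOn
  unfold TT
  refine hasFDerivAt_integral_of_dominated_of_fderiv_le
    (F := fun x w => K w • v (x - θ⁻¹ • w))
    (F' := fun x w => K w • fderiv ℝ v (x - θ⁻¹ • w))
    (bound := (tsupport K).indicator (fun _ => M))
    (Metric.closedBall_mem_nhds z one_pos) ?_ ?_ ?_ ?_ ?_ ?_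
  · exact Filter.Eventually.of_forall fun x => by
      exact aesm (by fun_prop)
  · exact integrable_smul_of_cs hK hKs (by fun_prop)
  · have : Continuous (fun w => K w • fderiv ℝ v (z - θ⁻¹ • w)) := by fun_prop
    exact aesm this
  · refine Filter.Eventually.of_forall fun w x hx => ?_
    by_cases hw : w ∈ tsupport K
    · rw [Set.indicator_of_mem hw]
      exact hM ⟨(x, w), ⟨hx, hw⟩, rfl⟩
    · rw [Set.indicator_of_notMem hw, image_eq_zero_of_notMem_tsupport hw]; simp
  · exact (integrable_indicator_iff (isClosed_tsupport K).measurableSet).2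
      (integrableOn_const (hs := hKs.measure_lt_top.ne))
  · refine Filter.Eventually.of_forall fun w x hx => ?_
    have h1 : HasFDerivAt v (fderiv ℝ v (x - θ⁻¹ • w)) (x - θ⁻¹ • w) :=
      (hv.differentiable (by simp) _).hasFDerivAt
    have h2 : HasFDerivAt (fun x => x - θ⁻¹ • w) (ContinuousLinearMap.id ℝ E3) x :=
      (hasFDerivAt_id x).sub_const _
    have h3 := (h1.comp x h2).const_smul (K w)
    rw [ContinuousLinearMap.comp_id] at h3
    exact h3

lemma fderiv_TT {K : E3 → ℝ} (hK : Continuous K) (hKs : HasCompactSupport K) (θ : ℝ)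
    {v : E3 → F} (hv : ContDiff ℝ 1 v) :
    fderiv ℝ (TT K θ v) = TT K θ (fderiv ℝ v) :=
  funext fun z => (hasFDerivAt_TT hK hKs θ hv z).fderiv

end basic

lemma contDiff_TT {K : E3 → ℝ} (hK : Continuous K) (hKs : HasCompactSupport K) (θ : ℝ) (n : ℕ) :
    ∀ {F : Type} [NormedAddCommGroup F] [NormedSpace ℝ F] {v : E3 → F},
    ContDiff ℝ (⊤ : ℕ∞) v → ContDiff ℝ n (TT K θ v) := by
  induction n with
  | zero =>
    intro F _ _ v hv
    have : Differentiable ℝ (TT K θ v) := fun z =>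
      (hasFDerivAt_TT hK hKs θ (hv.of_le (by exact_mod_cast le_top)) z).differentiableAt
    exact contDiff_zero.2 this.continuous
  | succ n ih =>
    intro F _ _ v hv
    have hv1 : ContDiff ℝ 1 v := hv.of_le (by exact_mod_cast le_top)
    have hd : Differentiable ℝ (TT K θ v) := fun z =>
      (hasFDerivAt_TT hK hKs θ hv1 z).differentiableAt
    have := (contDiff_succ_iff_fderiv (n := (n : WithTop ℕ∞)) (f := TT K θ v) (𝕜 := ℝ)).2
      ⟨hd, by simp, by
        rw [fderiv_TT hK hKs θ hv1]
        exact ih (hv.fderiv_right (by simp))⟩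
    exact_mod_cast this

lemma sq_integral_le {W : Type} [MeasurableSpace W] (μ : Measure W) [IsFiniteMeasure μ]
    (f : W → ℝ) (hf : Integrable (fun w => f w ^ 2) μ) :
    (∫ w, f w ∂μ) ^ 2 ≤ μ.real Set.univ * ∫ w, f w ^ 2 ∂μ := by
  by_cases hi : Integrable f μ
  · set m := ∫ w, f w ∂μ
    set T := μ.real Set.univ
    have h0 : 0 ≤ ∫ w, (T * f w - m) ^ 2 ∂μ := integral_nonneg fun w => sq_nonneg _
    have h1 : ∫ w, (T * f w - m) ^ 2 ∂μ = T ^ 2 * ∫ w, f w ^ 2 ∂μ - 2 * T * m * m + T * m ^ 2 := by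
      have : (fun w => (T * f w - m) ^ 2) =
          fun w => (T ^ 2 * f w ^ 2 - 2 * T * m * f w) + m ^ 2 := by ext w; ring
      rw [this, integral_add (f := fun w => T ^ 2 * f w ^ 2 - 2 * T * m * f w)
        ((hf.const_mul _).sub (hi.const_mul _)) (integrable_const _),
        integral_sub (hf.const_mul _) (hi.const_mul _), integral_const_mul, integral_const_mul]
      simp [T, m]
    by_cases hT : T = 0
    · have hμ : μ = 0 := by
        have : μ Set.univ = 0 := by
          simpa [T, Measure.real, ENNReal.toReal_eq_zero_iff] using hT
        simpa using this
      simp [m, hμ]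
    · have hTp : 0 < T := lt_of_le_of_ne measureReal_nonneg (Ne.symm hT)
      rw [h1] at h0
      have : 0 ≤ T * (T * ∫ w, f w ^ 2 ∂μ - m ^ 2) := by nlinarith
      nlinarith [nonneg_of_mul_nonneg_right this hTp]
  · rw [integral_undef hi]
    have : 0 ≤ ∫ w, f w ^ 2 ∂μ := integral_nonneg fun w => sq_nonneg _
    have h2 : 0 ≤ μ.real Set.univ := measureReal_nonneg
    simpa using mul_nonneg h2 this

lemma young {W : Type} [MeasurableSpace W] (μ : Measure W) [IsFiniteMeasure μ]
    (h : W → E3) (hh : Measurable h) (a : E3 → ℝ)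
    (ha2 : Integrable (fun z => a z ^ 2)) (G : E3 → ℝ) (c : ℝ) (hG0 : ∀ z, 0 ≤ G z)
    (hG : ∀ z, G z ≤ c * ∫ w, a (z - h w) ∂μ) :
    ∫ z, G z ^ 2 ≤ c ^ 2 * μ.real Set.univ ^ 2 * ∫ z, a z ^ 2 := by
  have hmp : MeasurePreserving (fun p : W × E3 => (p.1, p.2 - h p.1))
      (μ.prod volume) (μ.prod volume) := by
    refine MeasurePreserving.skew_product (g := fun w z => z - h w) (MeasurePreserving.id μ) ?_ ?_
    · exact measurable_snd.sub (hh.comp measurable_fst)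
    · exact Filter.Eventually.of_forall fun w => (measurePreserving_sub_right volume (h w)).map_eq
  have hI0 : Integrable (fun p : W × E3 => a p.2 ^ 2) (μ.prod volume) := ha2.comp_snd μ
  have hI : Integrable (fun p : W × E3 => a (p.2 - h p.1) ^ 2) (μ.prod volume) :=
    hmp.integrable_comp_of_integrable hI0
  have hae := hI.prod_left_ae
  have hintg := hI.integral_prod_right
  have hval : ∫ z, ∫ w, a (z - h w) ^ 2 ∂μ = μ.real Set.univ * ∫ z, a z ^ 2 := by
    rw [integral_integral_swap (f := fun z w => a (z - h w) ^ 2) hI.swap]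
    simp_rw [integral_sub_right_eq_self (fun z => a z ^ 2)]
    simp
  calc ∫ z, G z ^ 2 ≤ ∫ z, c ^ 2 * (μ.real Set.univ * ∫ w, a (z - h w) ^ 2 ∂μ) := by
        refine integral_mono_of_nonneg (Filter.Eventually.of_forall fun z => sq_nonneg _)
          ((hintg.const_mul _).const_mul _) ?_
        filter_upwards [hae] with z hz
        calc G z ^ 2 ≤ (c * ∫ w, a (z - h w) ∂μ) ^ 2 := pow_le_pow_left₀ (hG0 z) (hG z) 2
          _ = c ^ 2 * (∫ w, a (z - h w) ∂μ) ^ 2 := by ring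
          _ ≤ _ := by gcongr; exact sq_integral_le μ _ hz
    _ = _ := by
        rw [integral_const_mul, integral_const_mul, hval]; ring


lemma integrableOn_ball {F : Type} [NormedAddCommGroup F] {f : E3 → F} (hf : Continuous f) (R : ℝ) :
    Integrable f (volume.restrict (Metric.closedBall (0 : E3) R)) :=
  hf.continuousOn.integrableOn_compact (isCompact_closedBall _ _)

/-- a bound for the kernel with support in a ball -/
lemma kernel_bound {K : E3 → ℝ} (hK : Continuous K) {R : ℝ}
    (hR : tsupport K ⊆ Metric.closedBall 0 R) : ∃ M, 0 ≤ M ∧ ∀ w, |K w| ≤ M := by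
  have hKs : HasCompactSupport K := (isCompact_closedBall (0 : E3) R).of_isClosed_subset
    (isClosed_tsupport K) hR
  obtain ⟨M, hM⟩ := hK.bounded_above_of_compact_support hKs
  exact ⟨M, (norm_nonneg _).trans (hM 0), hM⟩

lemma norm_integral_kernel_le {F : Type} [NormedAddCommGroup F] [NormedSpace ℝ F]
    {K : E3 → ℝ} {R M : ℝ} (hM0 : 0 ≤ M)
    (hR : tsupport K ⊆ Metric.closedBall 0 R) (hM : ∀ w, |K w| ≤ M)
    (f : E3 → F) (g : E3 → ℝ) (hg : IntegrableOn g (Metric.closedBall (0 : E3) R))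
    (hfg : ∀ w ∈ Metric.closedBall (0 : E3) R, ‖f w‖ ≤ g w) :
    ‖∫ w, K w • f w‖ ≤ M * ∫ w in Metric.closedBall (0 : E3) R, g w := by
  have h1 : ∫ w, K w • f w = ∫ w in Metric.closedBall (0 : E3) R, K w • f w := by
    rw [setIntegral_eq_integral_of_forall_compl_eq_zero]
    intro w hw
    rw [image_eq_zero_of_notMem_tsupport (fun h => hw (hR h)), zero_smul]
  rw [h1, ← integral_const_mul]
  refine norm_integral_le_of_norm_le (hg.const_mul M) ?_
  refine (ae_restrict_iff' Metric.isClosed_closedBall.measurableSet).2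
    (Filter.Eventually.of_forall fun w hw => ?_)
  rw [norm_smul]
  exact mul_le_mul (hM w) (hfg w hw) (norm_nonneg _) hM0

lemma cs_of {K : E3 → ℝ} {R : ℝ} (hR : tsupport K ⊆ Metric.closedBall 0 R) :
    HasCompactSupport K :=
  (isCompact_closedBall (0 : E3) R).of_isClosed_subset (isClosed_tsupport K) hR

lemma TT_fderiv_apply {F : Type} [NormedAddCommGroup F] [NormedSpace ℝ F] [CompleteSpace F]
    {K : E3 → ℝ} (hK : ContDiff ℝ (⊤ : ℕ∞) K) (hKs : HasCompactSupport K) {θ : ℝ} (hθ : θ ≠ 0)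
    {v : E3 → F} (hv : ContDiff ℝ (⊤ : ℕ∞) v) (z e : E3) :
    TT K θ (fderiv ℝ v) z e = θ • TT (fun w => fderiv ℝ K w e) θ v z := by
  have hcv := hv.continuous
  have hcf := hv.continuous_fderiv (by simp)
  have hcK := hK.continuous
  have hcKf := hK.continuous_fderiv (by simp)
  have hg : ∀ w, HasFDerivAt (fun w => v (z - θ⁻¹ • w)) (-θ⁻¹ • fderiv ℝ v (z - θ⁻¹ • w)) w := by
    intro w
    have h1 : HasFDerivAt v (fderiv ℝ v (z - θ⁻¹ • w)) (z - θ⁻¹ • w) :=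
      (hv.differentiable (by simp) _).hasFDerivAt
    have h2 : HasFDerivAt (fun w : E3 => z - θ⁻¹ • w) (-(θ⁻¹ • ContinuousLinearMap.id ℝ E3)) w :=
      ((hasFDerivAt_id w).const_smul θ⁻¹).const_sub z
    have h3 := h1.comp w h2
    have h4 : (fderiv ℝ v (z - θ⁻¹ • w)).comp (-(θ⁻¹ • ContinuousLinearMap.id ℝ E3)) =
        -θ⁻¹ • fderiv ℝ v (z - θ⁻¹ • w) := by
      refine ContinuousLinearMap.ext fun x => ?_
      simp
    rw [h4] at h3
    exact h3
  have hgf : ∀ w, fderiv ℝ (fun w => v (z - θ⁻¹ • w)) w e = -θ⁻¹ • fderiv ℝ v (z - θ⁻¹ • w) e :=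
    fun w => by rw [(hg w).fderiv]; rfl
  have hK'c : HasCompactSupport (fun w => fderiv ℝ K w e) := hKs.fderiv_apply (𝕜 := ℝ) e
  have hcg : Continuous (fun w => fderiv ℝ v (z - θ⁻¹ • w)) := by fun_prop
  have key := integral_smul_fderiv_eq_neg_fderiv_smul_of_integrable (μ := (volume : Measure E3))
    (f := K) (g := fun w => v (z - θ⁻¹ • w)) (v := e)
    (integrable_smul_of_cs (by fun_prop) hK'c (by fun_prop))
    (by simp_rw [hgf]; exact integrable_smul_of_cs hcK hKs (by fun_prop))
    (integrable_smul_of_cs hcK hKs (by fun_prop))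
    (fun x _ => hK.differentiable (by simp) x) (fun x _ => (hg x).differentiableAt)
  simp_rw [hgf] at key
  have h4 : TT K θ (fderiv ℝ v) z e = ∫ w, K w • fderiv ℝ v (z - θ⁻¹ • w) e := by
    unfold TT
    rw [ContinuousLinearMap.integral_apply (integrable_smul_of_cs hcK hKs hcg)]
    rfl
  have h5 : ∫ w, K w • -θ⁻¹ • fderiv ℝ v (z - θ⁻¹ • w) e
      = -θ⁻¹ • ∫ w, K w • fderiv ℝ v (z - θ⁻¹ • w) e := by
    rw [← integral_smul]
    congr 1; ext w; rw [smul_comm]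
  rw [h5, neg_smul, neg_inj] at key
  rw [h4]
  unfold TT
  rw [← key, smul_smul, mul_inv_cancel₀ hθ, one_smul]

lemma clm_decomp {F : Type} [NormedAddCommGroup F] [NormedSpace ℝ F] (L : E3 →L[ℝ] F) :
    L = ∑ i, (ContinuousLinearMap.smulRightL ℝ E3 F
      (LinearMap.toContinuousLinearMap ((Module.finBasis ℝ E3).coord i)))
      (L (Module.finBasis ℝ E3 i)) := by
  refine ContinuousLinearMap.ext fun x => ?_
  conv_lhs => rw [← (Module.finBasis ℝ E3).sum_repr x]
  rw [map_sum, sum_apply]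
  simp

lemma E2_pt (R : ℝ) (m : ℕ) : ∀ K : E3 → ℝ, ContDiff ℝ (⊤ : ℕ∞) K →
    tsupport K ⊆ Metric.closedBall 0 R →
    ∃ C, 0 ≤ C ∧ ∀ (F : Type) [NormedAddCommGroup F] [NormedSpace ℝ F] [CompleteSpace F]
      (v : E3 → F), ContDiff ℝ (⊤ : ℕ∞) v → ∀ θ : ℝ, 1 ≤ θ → ∀ z,
      ‖iteratedFDeriv ℝ m (TT K θ v) z‖ ≤
        (C * θ ^ m) * ∫ w in Metric.closedBall (0 : E3) R, ‖v (z - θ⁻¹ • w)‖ := by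
  induction m with
  | zero =>
    intro K hK hR
    obtain ⟨M, hM0, hM⟩ := kernel_bound hK.continuous hR
    refine ⟨M, hM0, fun F _ _ _ v hv θ hθ z => ?_⟩
    rw [norm_iteratedFDeriv_zero, pow_zero, mul_one]
    have hcv := hv.continuous
    refine norm_integral_kernel_le hM0 hR hM _ _ (integrableOn_ball (by fun_prop) R)
      (fun w _ => le_rfl)
  | succ m ih =>
    intro K hK hR
    have hKs := cs_of hR
    set b := Module.finBasis ℝ E3
    have hKi : ∀ i, ContDiff ℝ (⊤ : ℕ∞) (fun w => fderiv ℝ K w (b i)) := fun i =>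
      (hK.fderiv_right (m := (⊤ : ℕ∞)) (by simp)).clm_apply contDiff_const
    have hRi : ∀ i, tsupport (fun w => fderiv ℝ K w (b i)) ⊆ Metric.closedBall 0 R := fun i =>
      (tsupport_fderiv_apply_subset ℝ (b i)).trans hR
    choose C hC0 hC using fun i => ih _ (hKi i) (hRi i)
    let c : Fin (Module.finrank ℝ E3) → ℝ := fun i => ‖LinearMap.toContinuousLinearMap (b.coord i)‖
    refine ⟨∑ i, c i * C i, Finset.sum_nonneg fun i _ => mul_nonneg (norm_nonneg _) (hC0 i),
      fun F _ _ _ v hv θ hθ z => ?_⟩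
    have hθ0 : θ ≠ 0 := by positivity
    have hcv := hv.continuous
    let A : Fin (Module.finrank ℝ E3) → F →L[ℝ] (E3 →L[ℝ] F) := fun i =>
      ContinuousLinearMap.smulRightL ℝ E3 F (LinearMap.toContinuousLinearMap (b.coord i))
    let g : Fin (Module.finrank ℝ E3) → E3 → F := fun i => TT (fun w => fderiv ℝ K w (b i)) θ v
    have hgc : ∀ i, ContDiff ℝ m (g i) := fun i =>
      contDiff_TT (hKi i).continuous (cs_of (hRi i)) θ m hv
    have hfd : fderiv ℝ (TT K θ v) = fun z => ∑ i, (θ • A i) (g i z) := by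
      rw [fderiv_TT hK.continuous hKs θ (hv.of_le (by exact_mod_cast le_top))]
      ext1 z
      rw [clm_decomp (TT K θ (fderiv ℝ v) z)]
      refine Finset.sum_congr rfl fun i _ => ?_
      rw [TT_fderiv_apply hK hKs hθ0 hv]
      simp [A, g, b]
    rw [← norm_iteratedFDeriv_fderiv, hfd, iteratedFDeriv_fun_sum_apply]
    · rw [Finset.sum_mul, Finset.sum_mul]
      refine norm_sum_le_of_le _ fun i _ => ?_
      have h1 := (θ • A i).norm_iteratedFDeriv_comp_left (f := g i) (x := z) (N := m) (n := m)
        (hgc i).contDiffAt le_rfl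
      refine h1.trans ?_
      have h2 : ‖θ • A i‖ ≤ θ * c i := by
        have hθp : (0 : ℝ) ≤ θ := by positivity
        refine ContinuousLinearMap.opNorm_le_bound _ (mul_nonneg hθp (norm_nonneg _)) fun x => ?_
        have h3 : ‖(A i) x‖ = c i * ‖x‖ := by simp [A, c]
        have h4 : (θ • A i) x = θ • (A i x) := rfl
        rw [h4, norm_smul, h3, Real.norm_of_nonneg hθp, mul_assoc]
      calc ‖θ • A i‖ * ‖iteratedFDeriv ℝ m (g i) z‖
          ≤ (θ * c i) * ((C i * θ ^ m) * ∫ w in Metric.closedBall (0 : E3) R, ‖v (z - θ⁻¹ • w)‖) := by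
            gcongr
            exact hC i F v hv θ hθ z
        _ = _ := by ring
    · intro i _
      exact ((θ • A i).contDiff.comp (hgc i)).contDiffAt

lemma E2_base (R : ℝ) (m : ℕ) (K : E3 → ℝ) (hK : ContDiff ℝ (⊤ : ℕ∞) K)
    (hR : tsupport K ⊆ Metric.closedBall 0 R) :
    ∃ C, 0 ≤ C ∧ ∀ (F : Type) [NormedAddCommGroup F] [NormedSpace ℝ F] [CompleteSpace F]
      (v : E3 → F), ContDiff ℝ (⊤ : ℕ∞) v → Integrable (fun z => ‖v z‖ ^ 2) → ∀ θ : ℝ, 1 ≤ θ →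
      ∫ z, ‖iteratedFDeriv ℝ m (TT K θ v) z‖ ^ 2 ≤ C * θ ^ (2 * m) * ∫ z, ‖v z‖ ^ 2 := by
  obtain ⟨C, hC0, hC⟩ := E2_pt R m K hK hR
  let μ : Measure E3 := volume.restrict (Metric.closedBall (0 : E3) R)
  have : IsFiniteMeasure μ := ⟨by
    simpa [μ] using (isCompact_closedBall (0 : E3) R).measure_lt_top⟩
  refine ⟨C ^ 2 * μ.real Set.univ ^ 2, by positivity, fun F _ _ _ v hv hi θ hθ => ?_⟩
  have := young μ (fun w => θ⁻¹ • w) (by fun_prop) (fun z => ‖v z‖) hi _ _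
    (fun z => norm_nonneg _) (hC F v hv θ hθ)
  refine this.trans (le_of_eq ?_)
  ring

lemma E2 (R : ℝ) (m : ℕ) (K : E3 → ℝ) (hK : ContDiff ℝ (⊤ : ℕ∞) K)
    (hR : tsupport K ⊆ Metric.closedBall 0 R) :
    ∃ C, 0 ≤ C ∧ ∀ (i : ℕ) (F : Type) [NormedAddCommGroup F] [NormedSpace ℝ F] [CompleteSpace F]
      (v : E3 → F), ContDiff ℝ (⊤ : ℕ∞) v →
      Integrable (fun z => ‖iteratedFDeriv ℝ i v z‖ ^ 2) → ∀ θ : ℝ, 1 ≤ θ →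
      ∫ z, ‖iteratedFDeriv ℝ (m + i) (TT K θ v) z‖ ^ 2 ≤
        C * θ ^ (2 * m) * ∫ z, ‖iteratedFDeriv ℝ i v z‖ ^ 2 := by
  obtain ⟨C, hC0, hC⟩ := E2_base R m K hK hR
  refine ⟨C, hC0, fun i => ?_⟩
  induction i with
  | zero =>
    intro F _ _ _ v hv hi θ hθ
    simp only [norm_iteratedFDeriv_zero] at hi ⊢
    exact hC F v hv hi θ hθ
  | succ i ih =>
    intro F _ _ _ v hv hi θ hθ
    have := ih (E3 →L[ℝ] F) (fderiv ℝ v) (hv.fderiv_right (by simp))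
      (by simpa only [norm_iteratedFDeriv_fderiv] using hi) θ hθ
    rw [← fderiv_TT hK.continuous (cs_of hR) θ (hv.of_le (by exact_mod_cast le_top))] at this
    simp only [norm_iteratedFDeriv_fderiv] at this
    exact this


/-- All homogeneous moments of degree `1..N` vanish. -/
def Mom (K : E3 → ℝ) (N : ℕ) : Prop :=
  ∀ (F : Type) [NormedAddCommGroup F] [NormedSpace ℝ F] (j : ℕ), 1 ≤ j → j ≤ N →
    ∀ P : E3 → F, Continuous P → (∀ l : ℝ, 0 < l → ∀ w, P (l • w) = l ^ j • P w) →
      ∫ w, K w • P w = 0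

/-- pointwise Taylor remainder -/
lemma taylor_pt {F : Type} [NormedAddCommGroup F] [NormedSpace ℝ F] [CompleteSpace F]
    {v : E3 → F} (hv : ContDiff ℝ (⊤ : ℕ∞) v) (n : ℕ) (z y : E3) :
    ‖v (z + y) - ∑ k ∈ Finset.range (n + 1),
      ((k.factorial : ℝ)⁻¹ • (iteratedFDeriv ℝ k v z (fun _ => y)))‖ ≤
      ‖y‖ ^ (n + 1) * ∫ t in Set.Icc (0 : ℝ) 1, ‖iteratedFDeriv ℝ (n + 1) v (z + t • y)‖ := by
  have h := map_add_eq_sum_add_integral_iteratedFDeriv (f := v) (x := z) (y := y) (n := n)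
    (fun t _ => (hv.of_le (by exact_mod_cast le_top)).contDiffAt)
  rw [h, add_sub_cancel_left, norm_smul]
  have hc : Continuous (iteratedFDeriv ℝ (n + 1) v) :=
    hv.continuous_iteratedFDeriv (by exact_mod_cast le_top)
  have h1 : ‖((n.factorial : ℝ)⁻¹)‖ ≤ 1 := by
    rw [norm_inv, Real.norm_natCast]
    exact inv_le_one_of_one_le₀ (by exact_mod_cast n.factorial_pos)
  refine (mul_le_of_le_one_left (norm_nonneg _) h1).trans ?_
  rw [intervalIntegral.integral_of_le zero_le_one, ← integral_Icc_eq_integral_Ioc,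
    ← integral_const_mul]
  refine norm_integral_le_of_norm_le ?_ ?_
  · exact (Continuous.continuousOn (by fun_prop)).integrableOn_compact isCompact_Icc
  · refine (ae_restrict_iff' measurableSet_Icc).2 (Filter.Eventually.of_forall fun t ht => ?_)
    rw [norm_smul]
    have h2 : ‖(1 - t) ^ n‖ ≤ 1 := by
      rw [norm_pow, Real.norm_of_nonneg (by linarith [ht.2])]
      exact pow_le_one₀ (by linarith [ht.2]) (by linarith [ht.1])
    refine (mul_le_of_le_one_left (norm_nonneg _) h2).trans ?_
    refine (ContinuousMultilinearMap.le_opNorm _ _).trans ?_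
    simp [mul_comm]

lemma E1_base (R : ℝ) (hR0 : 0 ≤ R) (N k : ℕ) (hk : k ≤ N + 1) (K : E3 → ℝ) (hK : Continuous K)
    (hR : tsupport K ⊆ Metric.closedBall 0 R) (hmom : Mom K N) :
    ∃ C, 0 ≤ C ∧ ∀ (F : Type) [NormedAddCommGroup F] [NormedSpace ℝ F] [CompleteSpace F]
      (v : E3 → F), ContDiff ℝ (⊤ : ℕ∞) v →
      Integrable (fun z => ‖iteratedFDeriv ℝ k v z‖ ^ 2) → ∀ θ : ℝ, 1 ≤ θ →
      ∫ z, ‖TT K θ v z - (∫ w, K w) • v z‖ ^ 2 ≤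
        C * (θ⁻¹) ^ (2 * k) * ∫ z, ‖iteratedFDeriv ℝ k v z‖ ^ 2 := by
  obtain ⟨M, hM0, hM⟩ := kernel_bound hK hR
  have hKs := cs_of hR
  let μ : Measure E3 := volume.restrict (Metric.closedBall (0 : E3) R)
  have : IsFiniteMeasure μ := ⟨by
    simpa [μ] using (isCompact_closedBall (0 : E3) R).measure_lt_top⟩
  rcases k with _ | n
  · let μ' : Measure E3 := μ + Measure.dirac 0
    set c : ℝ := max M |∫ w, K w|
    have hc0 : 0 ≤ c := hM0.trans (le_max_left _ _)
    refine ⟨c ^ 2 * μ'.real Set.univ ^ 2, by positivity, fun F _ _ _ v hv hi θ hθ => ?_⟩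
    simp only [norm_iteratedFDeriv_zero] at hi ⊢
    have hcv := hv.continuous
    have := young μ' (fun w => θ⁻¹ • w) (by fun_prop) (fun z => ‖v z‖) hi
      (fun z => ‖TT K θ v z - (∫ w, K w) • v z‖) c (fun z => norm_nonneg _) (fun z => by
        rw [integral_add_measure (integrableOn_ball (by fun_prop) R) (integrable_dirac (by simp)),
          integral_dirac]
        simp only [smul_zero, sub_zero]
        refine (norm_sub_le _ _).trans ?_
        rw [mul_add]
        refine add_le_add ?_ ?_
        · refine (norm_integral_kernel_le hM0 hR hM _ (fun w => ‖v (z - θ⁻¹ • w)‖)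
            (integrableOn_ball (by fun_prop) R) (fun w _ => le_rfl)).trans ?_
          exact mul_le_mul_of_nonneg_right (le_max_left _ _) (integral_nonneg fun _ => norm_nonneg _)
        · rw [norm_smul]
          exact mul_le_mul_of_nonneg_right (le_max_right _ _) (norm_nonneg _))
    simpa using this
  · let ν : Measure (E3 × ℝ) := μ.prod (volume.restrict (Set.Icc (0 : ℝ) 1))
    refine ⟨(M * R ^ (n + 1)) ^ 2 * ν.real Set.univ ^ 2, by positivity,
      fun F _ _ _ v hv hi θ hθ => ?_⟩
    have hcv := hv.continuous
    have hcD : Continuous (iteratedFDeriv ℝ (n + 1) v) :=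
      hv.continuous_iteratedFDeriv (by exact_mod_cast le_top)
    have hθ0 : 0 < θ := by positivity
    have hpt : ∀ z, ‖TT K θ v z - (∫ w, K w) • v z‖ ≤ (M * R ^ (n + 1) * (θ⁻¹) ^ (n + 1)) *
        ∫ p, ‖iteratedFDeriv ℝ (n + 1) v (z - (p.2 * θ⁻¹) • p.1)‖ ∂ν := by
      intro z
      let Q : ℕ → E3 → F := fun k w =>
        (k.factorial : ℝ)⁻¹ • (iteratedFDeriv ℝ k v z (fun _ => -(θ⁻¹ • w)))
      have hQc : ∀ k, Continuous (Q k) := by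
        intro k
        have : Continuous fun w : E3 => iteratedFDeriv ℝ k v z (fun _ => -(θ⁻¹ • w)) :=
          (iteratedFDeriv ℝ k v z).cont.comp (by fun_prop)
        exact this.const_smul _
      have hQ0 : ∀ k, 1 ≤ k → k ≤ N → ∫ w, K w • Q k w = 0 := by
        intro k h1 h2
        refine hmom F k h1 h2 _ (hQc k) fun l hl w => ?_
        simp only [Q]
        have : (fun _ : Fin k => -(θ⁻¹ • l • w)) = fun i => l • (-(θ⁻¹ • w)) := by
          ext1 i; rw [smul_neg, smul_comm]
        rw [this, ContinuousMultilinearMap.map_smul_univ, smul_comm]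
        simp
      have hsum : ∫ w, K w • ∑ k ∈ Finset.range (n + 1), Q k w = (∫ w, K w) • v z := by
        simp_rw [Finset.smul_sum]
        rw [integral_finsetSum _ (fun k _ => integrable_smul_of_cs hK hKs (hQc k)),
          Finset.sum_range_succ', Finset.sum_eq_zero, zero_add]
        · simp only [Q]
          simp [integral_smul_const]
        · intro k hk'
          exact hQ0 _ (by omega) (by have := Finset.mem_range.1 hk'; omega)
      have heq : TT K θ v z - (∫ w, K w) • v z =
          ∫ w, K w • (v (z - θ⁻¹ • w) - ∑ k ∈ Finset.range (n + 1), Q k w) := by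
        simp_rw [smul_sub]
        rw [integral_sub (integrable_smul_of_cs hK hKs (by fun_prop))
          (integrable_smul_of_cs hK hKs (continuous_finsetSum _ fun k _ => hQc k)), hsum]
        rfl
      have hcont : Continuous fun p : E3 × ℝ =>
          ‖iteratedFDeriv ℝ (n + 1) v (z - (p.2 * θ⁻¹) • p.1)‖ := by fun_prop
      have hintg : Integrable (fun p : E3 × ℝ =>
          ‖iteratedFDeriv ℝ (n + 1) v (z - (p.2 * θ⁻¹) • p.1)‖) ν := by
        simp only [ν, μ]
        rw [Measure.prod_restrict]
        exact hcont.continuousOn.integrableOn_compact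
          ((isCompact_closedBall _ _).prod isCompact_Icc)
      rw [heq, integral_prod _ hintg, mul_assoc, mul_assoc]
      rw [← integral_const_mul, ← integral_const_mul]
      refine norm_integral_kernel_le hM0 hR hM _ _ ((hintg.integral_prod_left.const_mul _).const_mul _) ?_
      intro w hw
      have ht := taylor_pt hv n z (-(θ⁻¹ • w))
      rw [← sub_eq_add_neg] at ht
      refine ht.trans ?_
      rw [← mul_assoc, ← mul_pow]
      have hw' : ‖-(θ⁻¹ • w)‖ ≤ R * θ⁻¹ := by
        rw [norm_neg, norm_smul, Real.norm_of_nonneg (by positivity), mul_comm]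
        gcongr
        simpa using hw
      have he : ∀ t : ℝ, z + t • -(θ⁻¹ • w) = z - (t * θ⁻¹) • w := fun t => by
        rw [smul_neg, smul_smul, sub_eq_add_neg]
      simp_rw [he]
      gcongr
    have := young ν (fun p => (p.2 * θ⁻¹) • p.1) (by fun_prop)
      (fun z => ‖iteratedFDeriv ℝ (n + 1) v z‖) hi
      (fun z => ‖TT K θ v z - (∫ w, K w) • v z‖) _ (fun z => norm_nonneg _) hpt
    refine this.trans (le_of_eq ?_)
    ring

lemma E1 (R : ℝ) (hR0 : 0 ≤ R) (N k : ℕ) (hk : k ≤ N + 1) (K : E3 → ℝ) (hK : Continuous K)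
    (hR : tsupport K ⊆ Metric.closedBall 0 R) (hmom : Mom K N) :
    ∃ C, 0 ≤ C ∧ ∀ (i : ℕ) (F : Type) [NormedAddCommGroup F] [NormedSpace ℝ F] [CompleteSpace F]
      (v : E3 → F), ContDiff ℝ (⊤ : ℕ∞) v →
      Integrable (fun z => ‖iteratedFDeriv ℝ (k + i) v z‖ ^ 2) → ∀ θ : ℝ, 1 ≤ θ →
      ∫ z, ‖iteratedFDeriv ℝ i (fun z => TT K θ v z - (∫ w, K w) • v z) z‖ ^ 2 ≤
        C * (θ⁻¹) ^ (2 * k) * ∫ z, ‖iteratedFDeriv ℝ (k + i) v z‖ ^ 2 := by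
  obtain ⟨C, hC0, hC⟩ := E1_base R hR0 N k hk K hK hR hmom
  refine ⟨C, hC0, fun i => ?_⟩
  induction i with
  | zero =>
    intro F _ _ _ v hv hi θ hθ
    simp only [norm_iteratedFDeriv_zero] at hi ⊢
    exact hC F v hv hi θ hθ
  | succ i ih =>
    intro F _ _ _ v hv hi θ hθ
    have hv1 : ContDiff ℝ 1 v := hv.of_le (by exact_mod_cast le_top)
    have := ih (E3 →L[ℝ] F) (fderiv ℝ v) (hv.fderiv_right (by simp))
      (by simp only [norm_iteratedFDeriv_fderiv]; exact hi) θ hθ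
    have hfd : fderiv ℝ (fun z => TT K θ v z - (∫ w, K w) • v z) =
        fun z => TT K θ (fderiv ℝ v) z - (∫ w, K w) • fderiv ℝ v z := by
      ext1 z
      exact ((hasFDerivAt_TT hK (cs_of hR) θ hv1 z).sub
        ((hv1.differentiable (by simp) z).hasFDerivAt.const_smul _)).fderiv
    rw [← hfd] at this
    simp only [norm_iteratedFDeriv_fderiv] at this
    exact this


lemma lagrange_coeffs (N : ℕ) : ∃ c : ℕ → ℝ, ∀ k ≤ N,
    ∑ j ∈ Finset.range (N + 1), c j * ((j : ℝ) + 1) ^ k = 0 ^ k := by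
  refine ⟨fun j => (Lagrange.basis (Finset.range (N + 1)) (fun j : ℕ => (j : ℝ) + 1) j).eval 0,
    fun k hk => ?_⟩
  have h := Lagrange.eq_interpolate (s := Finset.range (N + 1)) (v := fun j : ℕ => (j : ℝ) + 1)
    (f := (Polynomial.X ^ k : Polynomial ℝ)) (by intro a _ b _ hab; simpa using hab)
    (by rw [Polynomial.degree_X_pow, Finset.card_range]; exact_mod_cast Nat.lt_succ_of_le hk)
  have h2 := congrArg (Polynomial.eval 0) h
  rw [Lagrange.interpolate_apply, Polynomial.eval_finsetSum] at h2
  simp only [Polynomial.eval_pow, Polynomial.eval_X, Polynomial.eval_mul, Polynomial.eval_C] at h2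
  rw [h2]
  exact Finset.sum_congr rfl fun j _ => mul_comm _ _

lemma finrank_E3 : Module.finrank ℝ E3 = 3 := by
  simp [E3]

lemma exists_psi (N : ℕ) : ∃ (ψ : E3 → ℝ) (R : ℝ), 0 ≤ R ∧ ContDiff ℝ (⊤ : ℕ∞) ψ ∧
    tsupport ψ ⊆ Metric.closedBall 0 R ∧
    tsupport ψ ⊆ {z : ℝ × ℝ × ℝ | 0 ≤ z.2.2 ∧ z.1 ≤ 0} ∧ ∫ w, ψ w = 1 ∧ Mom ψ N := by
  obtain ⟨c, hc⟩ := lagrange_coeffs N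
  let B : ContDiffBump ((-2, 0, 2) : E3) := ⟨1 / 2, 1, by norm_num, by norm_num⟩
  let φ : E3 → ℝ := B.normed volume
  have hφ : ContDiff ℝ (⊤ : ℕ∞) φ := B.contDiff_normed
  have hφs : tsupport φ ⊆ Metric.closedBall ((-2, 0, 2) : E3) 1 :=
    (B.tsupport_normed_eq (μ := volume)).le
  have hφcs : HasCompactSupport φ := B.hasCompactSupport_normed
  have hφi : ∫ w, φ w = 1 := B.integral_normed
  let x : ℕ → ℝ := fun j => (j : ℝ) + 1
  have hx : ∀ j, 0 < x j := fun j => by positivity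
  let ψ : E3 → ℝ := fun w => ∑ j ∈ Finset.range (N + 1), (c j * (x j ^ 3)⁻¹) * φ ((x j)⁻¹ • w)
  have hφcs' : ∀ j, HasCompactSupport (fun w => φ ((x j)⁻¹ • w)) := fun j =>
    hφcs.comp_smul (inv_ne_zero (hx j).ne')
  have hφc := hφ.continuous
  have hintg : ∀ (F : Type) [NormedAddCommGroup F] [NormedSpace ℝ F] (k : ℕ), k ≤ N →
      ∀ P : E3 → F, Continuous P → (∀ l : ℝ, 0 < l → ∀ w, P (l • w) = l ^ k • P w) →
      ∫ w, ψ w • P w = (0 : ℝ) ^ k • ∫ w, φ w • P w := by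
    intro F _ _ k hk P hP hhom
    have h1 : ∀ j, ∫ w, φ ((x j)⁻¹ • w) • P w = (x j ^ 3 * x j ^ k) • ∫ w, φ w • P w := by
      intro j
      have h2 : ∀ w, φ ((x j)⁻¹ • w) • P w = x j ^ k • (fun w => φ w • P w) ((x j)⁻¹ • w) := by
        intro w
        have h3 := hhom (x j) (hx j) ((x j)⁻¹ • w)
        rw [smul_smul, mul_inv_cancel₀ (hx j).ne', one_smul] at h3
        rw [h3, smul_comm]
      simp_rw [h2]
      have h4 := Measure.integral_comp_inv_smul_of_nonneg (volume : Measure E3)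
        (fun w => φ w • P w) (hx j).le
      rw [integral_smul, h4, finrank_E3, smul_smul, mul_comm]
    calc ∫ w, ψ w • P w = ∫ w, ∑ j ∈ Finset.range (N + 1),
          (c j * (x j ^ 3)⁻¹) • (φ ((x j)⁻¹ • w) • P w) := by
          congr 1; ext1 w; simp only [ψ, Finset.sum_smul, mul_smul]
      _ = ∑ j ∈ Finset.range (N + 1), (c j * x j ^ k) • ∫ w, φ w • P w := by
          rw [integral_finsetSum (f := fun j w => (c j * (x j ^ 3)⁻¹) • (φ ((x j)⁻¹ • w) • P w))
            _ (fun j _ => (integrable_smul_of_cs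
            (K := fun w => φ ((x j)⁻¹ • w)) (by fun_prop) (hφcs' j) hP).smul _)]
          refine Finset.sum_congr rfl fun j _ => ?_
          rw [integral_smul, h1, smul_smul]
          congr 1
          have := (hx j).ne'
          field_simp
      _ = _ := by rw [← Finset.sum_smul, hc k hk]
  have hsupp : ∀ w, ψ w ≠ 0 → ∃ j ∈ Finset.range (N + 1),
      (x j)⁻¹ • w ∈ Metric.closedBall ((-2, 0, 2) : E3) 1 := by
    intro w hw
    obtain ⟨j, hj, hne⟩ := Finset.exists_ne_zero_of_sum_ne_zero hw
    exact ⟨j, hj, hφs (subset_tsupport _ (right_ne_zero_of_mul hne))⟩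
  refine ⟨ψ, 3 * (N + 1), by positivity, ?_, ?_, ?_, ?_, ?_⟩
  · refine ContDiff.sum fun j _ => ?_
    exact contDiff_const.mul (hφ.comp (contDiff_const_smul _))
  · refine closure_minimal ?_ Metric.isClosed_closedBall
    intro w hw
    obtain ⟨j, hj, hb⟩ := hsupp w hw
    have hjN : x j ≤ N + 1 := by
      have : j ≤ N := by have := Finset.mem_range.1 hj; omega
      have : (j : ℝ) ≤ N := by exact_mod_cast this
      simp only [x]; linarith
    have h1 : ‖(x j)⁻¹ • w‖ ≤ 3 := by
      have h2 : ‖((-2, 0, 2) : E3)‖ = 2 := by simp [Prod.norm_def]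
      have h3 := norm_le_norm_add_norm_sub' ((x j)⁻¹ • w) ((-2, 0, 2) : E3)
      rw [mem_closedBall_iff_norm] at hb
      linarith
    have h4 : w = x j • ((x j)⁻¹ • w) := by
      rw [smul_smul, mul_inv_cancel₀ (hx j).ne', one_smul]
    rw [mem_closedBall_zero_iff, h4, norm_smul, Real.norm_of_nonneg (hx j).le, mul_comm]
    exact mul_le_mul h1 hjN (hx j).le (by norm_num)
  · refine closure_minimal ?_ ?_
    · intro w hw
      obtain ⟨j, hj, hb⟩ := hsupp w hw
      rw [mem_closedBall_iff_norm] at hb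
      have h1 := (norm_fst_le _).trans hb
      have h2 := ((norm_snd_le _).trans (norm_snd_le _)).trans hb
      simp only [Prod.fst_sub, Prod.snd_sub, Prod.smul_fst, Prod.smul_snd, smul_eq_mul,
        Real.norm_eq_abs, abs_le] at h1 h2
      have h3 : 0 < (x j)⁻¹ := inv_pos.2 (hx j)
      constructor
      · by_contra hneg
        push Not at hneg
        nlinarith [h2.1]
      · by_contra hneg
        push Not at hneg
        nlinarith [h1.2]
    · exact (isClosed_le continuous_const (continuous_snd.comp continuous_snd)).inter
        (isClosed_le continuous_fst continuous_const)
  · have := hintg ℝ 0 (Nat.zero_le _) (fun _ => 1) continuous_const (by simp)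
    simpa [hφi] using this
  · intro F _ _ k h1 h2 P hP hhom
    rw [hintg F k h2 P hP hhom, zero_pow (by omega), zero_smul]

/-- vector-valued version of the smoothing operator -/
def SO {F : Type} [NormedAddCommGroup F] [NormedSpace ℝ F]
    (ψ : E3 → ℝ) (θ : ℝ) (u : E3 → F) (z : E3) : F :=
  ∫ w, (θ ^ 3 * ψ (θ • w)) • u (z - w)

lemma SO_eq_TT {F : Type} [NormedAddCommGroup F] [NormedSpace ℝ F]
    (ψ : E3 → ℝ) {θ : ℝ} (hθ : 0 < θ) (u : E3 → F) (z : E3) : SO ψ θ u z = TT ψ θ u z := by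
  have h := Measure.integral_comp_smul_of_nonneg (volume : Measure E3)
    (fun w => ψ w • u (z - θ⁻¹ • w)) θ (hR := hθ.le)
  simp only [smul_smul, inv_mul_cancel₀ hθ.ne', one_smul] at h
  unfold SO TT
  simp_rw [mul_smul]
  rw [integral_smul, h, finrank_E3, smul_smul, mul_inv_cancel₀ (by positivity), one_smul]

def chi (ψ : E3 → ℝ) : E3 → ℝ := fun w => 3 * ψ w + fderiv ℝ ψ w w

lemma chi_contDiff {ψ : E3 → ℝ} (hψ : ContDiff ℝ (⊤ : ℕ∞) ψ) : ContDiff ℝ (⊤ : ℕ∞) (chi ψ) :=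
  (contDiff_const.mul hψ).add ((hψ.fderiv_right (m := (⊤ : ℕ∞)) (by simp)).clm_apply contDiff_id)

lemma chi_tsupport {ψ : E3 → ℝ} {R : ℝ} (hR : tsupport ψ ⊆ Metric.closedBall 0 R) :
    tsupport (chi ψ) ⊆ Metric.closedBall 0 R := by
  refine closure_minimal ?_ Metric.isClosed_closedBall
  intro w hw
  by_contra hn
  have h1 : w ∉ tsupport ψ := fun h => hn (hR h)
  have h2 : w ∉ tsupport (fderiv ℝ ψ) := fun h => h1 (tsupport_fderiv_subset ℝ h)
  apply hw
  simp [chi, image_eq_zero_of_notMem_tsupport h1, image_eq_zero_of_notMem_tsupport h2]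

lemma hasDerivAt_SO {F : Type} [NormedAddCommGroup F] [NormedSpace ℝ F]
    {ψ : E3 → ℝ} (hψ : ContDiff ℝ (⊤ : ℕ∞) ψ) {R : ℝ} (hR0 : 0 ≤ R)
    (hR : tsupport ψ ⊆ Metric.closedBall 0 R) {u : E3 → F} (hu : Continuous u) (z : E3)
    {θ : ℝ} (hθ : 0 < θ) :
    HasDerivAt (fun ϑ => SO ψ ϑ u z) (θ⁻¹ • TT (chi ψ) θ u z) θ := by
  let F' : ℝ → E3 → F := fun ϑ w =>
    (3 * ϑ ^ 2 * ψ (ϑ • w) + ϑ ^ 3 * fderiv ℝ ψ (ϑ • w) w) • u (z - w)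
  have hcψ := hψ.continuous
  have hcf := hψ.continuous_fderiv (by simp)
  have hcF' : Continuous (fun p : ℝ × E3 => F' p.1 p.2) := by
    simp only [F']; fun_prop
  have hcomp : IsCompact (Metric.closedBall θ (θ / 2) ×ˢ Metric.closedBall (0 : E3) (2 * R / θ)) :=
    (isCompact_closedBall _ _).prod (isCompact_closedBall _ _)
  obtain ⟨M, hM⟩ := hcomp.bddAbove_image hcF'.norm.continuousOn
  have hout : ∀ ϑ ∈ Metric.closedBall θ (θ / 2), ∀ w ∉ Metric.closedBall (0 : E3) (2 * R / θ),
      ϑ • w ∉ Metric.closedBall (0 : E3) R := by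
    intro ϑ hϑ w hw h
    rw [mem_closedBall_zero_iff] at hw h
    rw [Metric.mem_closedBall, Real.dist_eq, abs_le] at hϑ
    rw [norm_smul, Real.norm_of_nonneg (by linarith [hϑ.1])] at h
    apply hw
    rw [le_div_iff₀ hθ]
    nlinarith [norm_nonneg w, hϑ.1]
  have h1 : θ⁻¹ • TT (chi ψ) θ u z = ∫ w, F' θ w := by
    rw [← SO_eq_TT _ hθ]
    unfold SO
    rw [← integral_smul]
    congr 1; ext1 w
    rw [smul_smul]
    congr 1
    simp only [chi, map_smul, smul_eq_mul]
    field_simp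
  rw [h1]
  refine (hasDerivAt_integral_of_dominated_loc_of_deriv_le
    (F := fun ϑ w => (ϑ ^ 3 * ψ (ϑ • w)) • u (z - w)) (F' := F')
    (bound := (Metric.closedBall (0 : E3) (2 * R / θ)).indicator (fun _ => M))
    (Metric.closedBall_mem_nhds θ (half_pos hθ)) ?_ ?_ ?_ ?_ ?_ ?_).2
  · exact Filter.Eventually.of_forall fun ϑ => aesm (by fun_prop)
  · refine integrable_smul_of_cs (K := fun w => θ ^ 3 * ψ (θ • w)) (by fun_prop) ?_ (by fun_prop)
    exact ((cs_of hR).comp_smul hθ.ne').mul_left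
  · exact aesm (hcF'.comp (by fun_prop : Continuous fun w : E3 => (θ, w)))
  · refine Filter.Eventually.of_forall fun w ϑ hϑ => ?_
    by_cases hw : w ∈ Metric.closedBall (0 : E3) (2 * R / θ)
    · rw [Set.indicator_of_mem hw]
      exact hM ⟨(ϑ, w), ⟨hϑ, hw⟩, rfl⟩
    · rw [Set.indicator_of_notMem hw]
      have h1 : ϑ • w ∉ tsupport ψ := fun h => hout ϑ hϑ w hw (hR h)
      have h2 : ϑ • w ∉ tsupport (fderiv ℝ ψ) := fun h => h1 (tsupport_fderiv_subset ℝ h)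
      simp [F', image_eq_zero_of_notMem_tsupport h1, image_eq_zero_of_notMem_tsupport h2]
  · exact (integrable_indicator_iff Metric.isClosed_closedBall.measurableSet).2
      (integrableOn_const (hs := (isCompact_closedBall _ _).measure_lt_top.ne))
  · refine Filter.Eventually.of_forall fun w ϑ _ => ?_
    have h2 : HasDerivAt (fun ϑ : ℝ => ϑ • w) w ϑ := by
      simpa using (hasDerivAt_id ϑ).smul_const w
    have h3 : HasDerivAt (fun ϑ : ℝ => ψ (ϑ • w)) (fderiv ℝ ψ (ϑ • w) w) ϑ :=
      (hψ.differentiable (by simp) _).hasFDerivAt.comp_hasDerivAt ϑ h2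
    have h4 := ((hasDerivAt_pow 3 ϑ).mul h3).smul_const (u (z - w))
    simpa [F'] using h4

lemma chi_zero {F : Type} [NormedAddCommGroup F] [NormedSpace ℝ F]
    {ψ : E3 → ℝ} (hψ : ContDiff ℝ (⊤ : ℕ∞) ψ) {R : ℝ} (hR0 : 0 ≤ R)
    (hR : tsupport ψ ⊆ Metric.closedBall 0 R) {P : E3 → F} (hP : Continuous P) (a : F)
    (h : ∀ ϑ : ℝ, 0 < ϑ → ∫ w, ψ w • P (ϑ⁻¹ • w) = a) : ∫ w, chi ψ w • P w = 0 := by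
  have h1 := hasDerivAt_SO hψ hR0 hR (u := fun w => P (-w)) (by fun_prop) 0 one_pos
  have h2 : (fun ϑ => SO ψ ϑ (fun w => P (-w)) 0) =ᶠ[nhds 1] fun _ => a := by
    filter_upwards [lt_mem_nhds one_pos] with ϑ hϑ
    rw [SO_eq_TT _ hϑ]
    simpa [TT] using h ϑ hϑ
  have h3 := h1.unique ((hasDerivAt_const (1 : ℝ) a).congr_of_eventuallyEq h2)
  simpa [TT] using h3

lemma chi_mom {ψ : E3 → ℝ} (hψ : ContDiff ℝ (⊤ : ℕ∞) ψ) {R : ℝ} (hR0 : 0 ≤ R)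
    (hR : tsupport ψ ⊆ Metric.closedBall 0 R) {N : ℕ} (hm : Mom ψ N) : Mom (chi ψ) N := by
  intro F _ _ j h1 h2 P hP hhom
  refine chi_zero hψ hR0 hR hP 0 fun ϑ hϑ => ?_
  refine hm F j h1 h2 _ (by fun_prop) fun l hl w => ?_
  rw [smul_comm, hhom l hl]

lemma chi_int {ψ : E3 → ℝ} (hψ : ContDiff ℝ (⊤ : ℕ∞) ψ) {R : ℝ} (hR0 : 0 ≤ R)
    (hR : tsupport ψ ⊆ Metric.closedBall 0 R) : ∫ w, chi ψ w = 0 := by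
  have := chi_zero hψ hR0 hR (P := fun _ => (1 : ℝ)) continuous_const (∫ w, ψ w) (fun ϑ _ => by simp)
  simpa using this

lemma SobSq_term_le {s' j : ℕ} (hj : j ≤ s') (u : E3 → ℝ) :
    ∫ z, ‖iteratedFDeriv ℝ j u z‖ ^ 2 ≤ SobSq s' u := by
  unfold SobSq
  exact Finset.single_le_sum (f := fun i => ∫ z, ‖iteratedFDeriv ℝ i u z‖ ^ 2)
    (fun i _ => integral_nonneg fun z => sq_nonneg _) (Finset.mem_range.2 (by omega))

lemma SobSq_nonneg (s : ℕ) (u : E3 → ℝ) : 0 ≤ SobSq s u :=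
  Finset.sum_nonneg fun i _ => integral_nonneg fun z => sq_nonneg _

lemma SobSq_le_of {s : ℕ} {g : E3 → ℝ} {D : ℕ → ℝ} {X : ℝ} (hX : 0 ≤ X)
    (h : ∀ i ≤ s, ∫ z, ‖iteratedFDeriv ℝ i g z‖ ^ 2 ≤ D i * X) :
    SobSq s g ≤ (1 + ∑ i ∈ Finset.range (s + 1), D i) * X := by
  have h1 : SobSq s g ≤ ∑ i ∈ Finset.range (s + 1), D i * X :=
    Finset.sum_le_sum fun i hi => h i (by have := Finset.mem_range.1 hi; omega)
  rw [← Finset.sum_mul] at h1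
  nlinarith

lemma term_bound {I A D p q J S : ℝ} (h : I ≤ A * p * J) (hA : 0 ≤ A) (hAD : A ≤ D)
    (hp : 0 ≤ p) (hpq : p ≤ q) (hJ : 0 ≤ J) (hJS : J ≤ S) : I ≤ D * (q * S) := by
  refine h.trans ?_
  rw [mul_assoc]
  exact mul_le_mul hAD (mul_le_mul hpq hJS hJ (hp.trans hpq)) (mul_nonneg hp hJ) (hA.trans hAD)

lemma pow_le_zpow_aux {θ : ℝ} (hθ : 1 ≤ θ) {n : ℕ} {e : ℤ} (h : (n : ℤ) ≤ e) : θ ^ n ≤ θ ^ e := by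
  rw [← zpow_natCast]; exact zpow_le_zpow_right₀ hθ h

lemma inv_pow_le_zpow_aux {θ : ℝ} (hθ : 1 ≤ θ) {n : ℕ} {e : ℤ} (h : -(n : ℤ) ≤ e) :
    θ⁻¹ ^ n ≤ θ ^ e := by
  rw [inv_pow, ← zpow_natCast, ← zpow_neg]; exact zpow_le_zpow_right₀ hθ h

/-- **Smoothing operators respecting flatness** (Section III.4.1): there is a Schwartz
function `ψ` supported in `{t ≥ 0, x ≤ 0}`, of integral 1 and with vanishing moments up to
order `s̄`, whose associated mollifiers `S_θ` satisfy the usual four smoothing estimates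
in the `H^s` scales, `0 ≤ s, s′ ≤ s̄`.  (The estimates are stated for squared norms.) -/
theorem smoothing_operators (sbar : ℕ) :
    ∃ ψ : SchwartzMap (ℝ × ℝ × ℝ) ℝ,
      tsupport (ψ : ℝ × ℝ × ℝ → ℝ) ⊆ {z : ℝ × ℝ × ℝ | 0 ≤ z.2.2 ∧ z.1 ≤ 0} ∧
      (∫ z : ℝ × ℝ × ℝ, ψ z) = 1 ∧
      (∀ a b c : ℕ, 1 ≤ a + b + c → a + b + c ≤ sbar →
        (∫ z : ℝ × ℝ × ℝ, z.1 ^ a * z.2.1 ^ b * z.2.2 ^ c * ψ z) = 0) ∧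
      ∀ s s' : ℕ, s ≤ sbar → s' ≤ sbar →
        ∃ C : ℝ, 0 < C ∧
          ∀ u : ℝ × ℝ × ℝ → ℝ, ContDiff ℝ (⊤ : ℕ∞) u →
            (∀ i : ℕ, i ≤ s' →
              Integrable (fun z : ℝ × ℝ × ℝ => ‖iteratedFDeriv ℝ i u z‖ ^ 2)) →
            ∀ θ : ℝ, 1 ≤ θ →
              (s ≤ s' →
                SobSq s (smoothOp (fun z => ψ z) θ u) ≤ C * SobSq s' u) ∧
              (s' ≤ s →
                SobSq s (smoothOp (fun z => ψ z) θ u) ≤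
                  C * θ ^ (2 * ((s : ℤ) - s')) * SobSq s' u) ∧
              (s ≤ s' →
                SobSq s (fun z => u z - smoothOp (fun z' => ψ z') θ u z) ≤
                  C * θ ^ (2 * ((s : ℤ) - s')) * SobSq s' u) ∧
              SobSq s (fun z => deriv (fun ϑ => smoothOp (fun z' => ψ z') ϑ u z) θ) ≤
                C * θ ^ (2 * ((s : ℤ) - s' - 1)) * SobSq s' u := by
  obtain ⟨ψ, R, hR0, hψ, hR, hsupp, hintg, hmom⟩ := exists_psi sbar
  have hχ := chi_contDiff hψ
  have hχR := chi_tsupport hR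
  have hχm := chi_mom hψ hR0 hR hmom
  have hχi := chi_int hψ hR0 hR
  refine ⟨(cs_of hR).toSchwartzMap hψ, hsupp, hintg, ?_, ?_⟩
  · intro a b c h1 h2
    have := hmom ℝ (a + b + c) h1 h2 (fun z => z.1 ^ a * z.2.1 ^ b * z.2.2 ^ c) (by fun_prop)
      (fun l _ w => by
        simp only [Prod.smul_fst, Prod.smul_snd, smul_eq_mul]; ring)
    rw [← this]
    refine integral_congr_ae (Filter.Eventually.of_forall fun z => ?_)
    exact mul_comm _ _
  intro s s' hs hs'
  choose A1 hA10 hA1 using fun m => E2 R m ψ hψ hR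
  choose A2 hA20 hA2 using fun m => E2 R m (chi ψ) hχ hχR
  choose B1 hB10 hB1 using fun i : ℕ => E1 R hR0 sbar (s' - i) (by omega) ψ hψ.continuous hR hmom
  choose B2 hB20 hB2 using fun i : ℕ => E1 R hR0 sbar (s' - i) (by omega) (chi ψ) hχ.continuous hχR hχm
  let D : ℕ → ℝ := fun i => A1 0 + A1 (i - s') + A2 (i - s') + B1 i + B2 i
  have hD0 : ∀ i, 0 ≤ D i := fun i => by
    have := hA10 0; have := hA10 (i - s'); have := hA20 (i - s'); have := hB10 i; have := hB20 i
    simp only [D]; linarith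
  have hDA0 : ∀ i, A1 0 ≤ D i := fun i => by
    have := hA10 0; have := hA10 (i - s'); have := hA20 (i - s'); have := hB10 i; have := hB20 i
    simp only [D]; linarith
  have hDA1 : ∀ i, A1 (i - s') ≤ D i := fun i => by
    have := hA10 0; have := hA10 (i - s'); have := hA20 (i - s'); have := hB10 i; have := hB20 i
    simp only [D]; linarith
  have hDA2 : ∀ i, A2 (i - s') ≤ D i := fun i => by
    have := hA10 0; have := hA10 (i - s'); have := hA20 (i - s'); have := hB10 i; have := hB20 i
    simp only [D]; linarith
  have hDB1 : ∀ i, B1 i ≤ D i := fun i => by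
    have := hA10 0; have := hA10 (i - s'); have := hA20 (i - s'); have := hB10 i; have := hB20 i
    simp only [D]; linarith
  have hDB2 : ∀ i, B2 i ≤ D i := fun i => by
    have := hA10 0; have := hA10 (i - s'); have := hA20 (i - s'); have := hB10 i; have := hB20 i
    simp only [D]; linarith
  refine ⟨1 + ∑ i ∈ Finset.range (s + 1), D i,
    by have := Finset.sum_nonneg (s := Finset.range (s + 1)) (fun i _ => hD0 i); linarith,
    fun u hu hi θ hθ => ?_⟩
  have hθ0 : 0 < θ := by positivity
  have hS0 := SobSq_nonneg s' u
  have hTT : smoothOp ψ θ u = TT ψ θ u := funext fun z => SO_eq_TT ψ hθ0 u z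
  have hJ0 : ∀ j, 0 ≤ ∫ z, ‖iteratedFDeriv ℝ j u z‖ ^ 2 :=
    fun j => integral_nonneg fun z => sq_nonneg _
  have hz0 : ∀ e : ℤ, 0 < θ ^ e := fun e => zpow_pos hθ0 e
  -- low order terms
  have hlow : ∀ i ≤ s', ∫ z, ‖iteratedFDeriv ℝ i (TT ψ θ u) z‖ ^ 2 ≤ D i * (1 * SobSq s' u) := by
    intro i his
    have := hA1 0 i ℝ u hu (hi i his) θ hθ
    rw [zero_add] at this
    exact term_bound this (hA10 0) (hDA0 i) (by simp) (by simp) (hJ0 i) (SobSq_term_le his u)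
  refine ⟨fun hss => ?_, fun hss => ?_, fun hss => ?_, ?_⟩
  · change SobSq s (smoothOp ψ θ u) ≤ _
    rw [hTT, ← one_mul (SobSq s' u)]
    exact SobSq_le_of (by linarith) fun i his => hlow i (his.trans hss)
  · change SobSq s (smoothOp ψ θ u) ≤ _
    rw [hTT, mul_assoc]
    refine SobSq_le_of (mul_nonneg (hz0 _).le hS0) fun i his => ?_
    rcases le_total i s' with h | h
    · refine (hlow i h).trans ?_
      have h1 : (1 : ℝ) ≤ θ ^ (2 * ((s : ℤ) - s')) := one_le_zpow₀ hθ (by omega)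
      exact mul_le_mul_of_nonneg_left (mul_le_mul_of_nonneg_right h1 hS0) (hD0 i)
    · have h1 := hA1 (i - s') s' ℝ u hu (hi s' le_rfl) θ hθ
      rw [Nat.sub_add_cancel h] at h1
      exact term_bound h1 (hA10 _) (hDA1 i) (by positivity)
        (pow_le_zpow_aux hθ (by push_cast [Nat.cast_sub h]; omega)) (hJ0 s')
        (SobSq_term_le le_rfl u)
  · change SobSq s (fun z => u z - smoothOp ψ θ u z) ≤ _
    rw [hTT, mul_assoc]
    refine SobSq_le_of (mul_nonneg (hz0 _).le hS0) fun i his => ?_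
    have h := his.trans hss
    have h1 := hB1 i i ℝ u hu (by rw [Nat.sub_add_cancel h]; exact hi s' le_rfl) θ hθ
    rw [Nat.sub_add_cancel h, hintg] at h1
    have h2 : (fun z => u z - TT ψ θ u z) = -(fun z => TT ψ θ u z - (1 : ℝ) • u z) := by
      ext z; simp
    simp only [h2, iteratedFDeriv_neg_apply, norm_neg]
    exact term_bound h1 (hB10 _) (hDB1 i) (by positivity)
      (inv_pow_le_zpow_aux hθ (by push_cast [Nat.cast_sub h]; omega)) (hJ0 s')
      (SobSq_term_le le_rfl u)
  · have hder : (fun z => deriv (fun ϑ => smoothOp ψ ϑ u z) θ) = θ⁻¹ • TT (chi ψ) θ u := by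
      ext z
      exact (hasDerivAt_SO hψ hR0 hR hu.continuous z hθ0).deriv
    change SobSq s (fun z => deriv (fun ϑ => smoothOp ψ ϑ u z) θ) ≤ _
    rw [hder, mul_assoc]
    refine SobSq_le_of (mul_nonneg (hz0 _).le hS0) fun i his => ?_
    have hcd : ContDiff ℝ i (TT (chi ψ) θ u) := contDiff_TT hχ.continuous (cs_of hχR) θ i hu
    have hsm : ∫ z, ‖iteratedFDeriv ℝ i (θ⁻¹ • TT (chi ψ) θ u) z‖ ^ 2 =
        θ⁻¹ ^ 2 * ∫ z, ‖iteratedFDeriv ℝ i (TT (chi ψ) θ u) z‖ ^ 2 := by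
      rw [← integral_const_mul]
      congr 1; ext z
      rw [iteratedFDeriv_const_smul_apply hcd.contDiffAt, norm_smul,
        Real.norm_of_nonneg (by positivity), mul_pow]
    have hze : θ ^ (2 * ((s : ℤ) - s' - 1)) = θ⁻¹ ^ 2 * θ ^ (2 * ((s : ℤ) - s')) := by
      rw [inv_pow, ← zpow_natCast θ 2, ← zpow_neg, ← zpow_add₀ hθ0.ne']
      congr 1; push_cast; ring
    have hmain : ∫ z, ‖iteratedFDeriv ℝ i (TT (chi ψ) θ u) z‖ ^ 2 ≤
        D i * (θ ^ (2 * ((s : ℤ) - s')) * SobSq s' u) := by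
      rcases le_total i s' with h | h
      · have h1 := hB2 i i ℝ u hu (by rw [Nat.sub_add_cancel h]; exact hi s' le_rfl) θ hθ
        rw [Nat.sub_add_cancel h, hχi] at h1
        simp only [zero_smul, sub_zero] at h1
        exact term_bound h1 (hB20 _) (hDB2 i) (by positivity)
          (inv_pow_le_zpow_aux hθ (by push_cast [Nat.cast_sub h]; omega)) (hJ0 s')
          (SobSq_term_le le_rfl u)
      · have h1 := hA2 (i - s') s' ℝ u hu (hi s' le_rfl) θ hθ
        rw [Nat.sub_add_cancel h] at h1
        exact term_bound h1 (hA20 _) (hDA2 i) (by positivity)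
          (pow_le_zpow_aux hθ (by push_cast [Nat.cast_sub h]; omega)) (hJ0 s')
          (SobSq_term_le le_rfl u)
    rw [hsm, hze]
    have := mul_le_mul_of_nonneg_left hmain (by positivity : 0 ≤ θ⁻¹ ^ 2)
    refine this.trans (le_of_eq ?_)
    ring

end
end
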